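/- arXiv:1504.06522 — 5 statements merged into one kernel-verified Lean document; each statement's English description precedes it below -/
import Mathlib

section
/- Set eps_i := 1 if i <= 2 and eps_i := 2 if i >= 3. Assume 1 <= i <= n and (i <= 3 or n <= 4). Then for all nonnegative integers k and l, S(D, (k + eps_i*l)*omega_i) = S(D, k*omega_i) + S(D, eps_i*l*omega_i). -/
open scoped Pointwise

/-- A single step in a Dyck path: `α_{p,q} → α_{p,q+1}` or `α_{p,q} → α_{p+1,q}`. -/
def RootStep (a b : ℕ × ℕ) : Prop :=
  (b.1 = a.1 ∧ b.2 = a.2 + 1) ∨ (b.1 = a.1 + 1 ∧ b.2 = a.2)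

/-- `inR n i (p,q)` means that `α_{p,q}` is a positive root of `B_n`
(`1 ≤ p ≤ n`, `p ≤ q ≤ 2n-p`) belonging to `R_i^+`, i.e. `p ≤ i ≤ q`. -/
def inR (n i : ℕ) (a : ℕ × ℕ) : Prop :=
  1 ≤ a.1 ∧ a.1 ≤ i ∧ i ≤ a.2 ∧ a.1 + a.2 ≤ 2 * n

/-- A type 1 Dyck path for `R_i^+` of `B_n`, recorded as the list of its roots. -/
def IsType1 (n i : ℕ) (L : List (ℕ × ℕ)) : Prop :=
  L ≠ [] ∧ L.Chain' RootStep ∧ (∀ x ∈ L, inR n i x) ∧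
    ((L.head? = some (1, i) ∧ L.getLast? = some (i, 2 * n - i - 1)) ∨
     (L.head? = some (1, i + 1) ∧ L.getLast? = some (i, 2 * n - i)))

/-- A type 2 (double) Dyck path for `R_i^+` of `B_n`, recorded as the pair of lists of
roots of its two constituent single paths. -/
def IsType2 (n i : ℕ) (L1 L2 : List (ℕ × ℕ)) : Prop :=
  ∃ j : ℕ, 1 ≤ j ∧ j < i ∧
    L1 ≠ [] ∧ L2 ≠ [] ∧ L1.Chain' RootStep ∧ L2.Chain' RootStep ∧
    (∀ x ∈ L1, inR n i x) ∧ (∀ x ∈ L2, inR n i x) ∧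
    L1.head? = some (1, i) ∧ L2.head? = some (2, i) ∧
    L1.getLast? = some (j, 2 * n - j) ∧ L2.getLast? = some (j + 1, 2 * n - j - 1) ∧
    (∀ x, ¬(x ∈ L1 ∧ x ∈ L2))

/-- The constant `c_i`: `1` if `i = 1` or `i = n`, and `2` if `2 ≤ i ≤ n-1`. -/
def cB (n i : ℕ) : ℕ := if i = 1 ∨ i = n then 1 else 2

/-- `SD n i m` is the set `S(D, m·ω_i)` of lattice points of the Dyck-path polytope:
multi-exponents `s` supported on `R_i^+` with `∑_{β ∈ p} s_β ≤ m` for every type 1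
Dyck path `p` and `∑_{β ∈ p} s_β ≤ m·c_i` for every type 2 Dyck path `p`.
(Elements of a Dyck path are pairwise distinct, so summation over the recording
lists agrees with summation over the underlying set of roots.) -/
def SD (n i m : ℕ) : Set ((ℕ × ℕ) → ℕ) :=
  {s | (∀ β, ¬ inR n i β → s β = 0) ∧
       (∀ L, IsType1 n i L → (L.map s).sum ≤ m) ∧
       (∀ L1 L2, IsType2 n i L1 L2 → ((L1 ++ L2).map s).sum ≤ m * cB n i)}

/-- `ε_i`: `1` if `i ≤ 2`, and `2` if `i ≥ 3`. -/
def epsB (i : ℕ) : ℕ := if i ≤ 2 then 1 else 2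

/-! By induction on `l` it suffices to split a point of level `ε_i` off every point of level
`m ≥ ε_i`, and for this to split off a point of level `1`, or, if `i ≥ 3`, of level `1` or `2`.

If `i < n`, then `i ≤ 3` and the points are arrays with at most three rows. Writing `lead τ` and
`trail σ` for the sums over the paths that leave the top row at once, respectively enter the bottom
row in the last column, every other path has weight `lead τ + trail σ` up to a correction that does
not depend on the path, so that all inequalities become conditions on these two functions of one
variable. The last entry of the top row occurs in a single inequality and is distributed at the
end. The point that is split off consists of a few entries, chosen where `lead` or `trail` first or
last exceeds a threshold; level `2` is needed only if the top row is nonzero, hence not for `i ≤ 2`.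

If `i = n ≤ 4`, there are no type 1 paths and at most five double paths, and the entries to split
off can be listed. -/

theorem exists_first {P : ℕ → Prop} {a b : ℕ} (hab : a ≤ b) (ha : ¬P a) (hb : P b) :
    ∃ p, a < p ∧ p ≤ b ∧ P p ∧ ∀ j, a ≤ j → j < p → ¬P j := by
  classical
  have hex : ∃ p, a ≤ p ∧ P p := ⟨b, hab, hb⟩
  have hspec := Nat.find_spec hex
  refine ⟨Nat.find hex, hspec.1.lt_of_ne fun h => ha (h ▸ hspec.2), Nat.find_min' hex ⟨hab, hb⟩,
    hspec.2, fun j hj hlt hPj => Nat.find_min hex hlt ⟨hj, hPj⟩⟩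

theorem exists_last {P : ℕ → Prop} {a b : ℕ} (hab : a ≤ b) (ha : P a) (hb : ¬P b) :
    ∃ r, a ≤ r ∧ r < b ∧ P r ∧ ∀ j, r < j → j ≤ b → ¬P j := by
  classical
  have hr := Nat.findGreatest_spec hab ha
  refine ⟨Nat.findGreatest P b, Nat.le_findGreatest hab ha,
    (Nat.findGreatest_le b).lt_of_ne fun h => hb (h ▸ hr), hr,
    fun j => Nat.findGreatest_is_greatest⟩

theorem exists_first_pos (f : ℕ → ℕ) (N : ℕ) :
    ∃ p ≤ N, (∀ j < p, f j = 0) ∧ (p < N → 0 < f p) := by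
  by_cases hex : ∃ p, 0 < f p ∧ p < N
  · refine ⟨Nat.find hex, (Nat.find_spec hex).2.le, fun j hj => ?_, fun _ => (Nat.find_spec hex).1⟩
    have := Nat.find_min hex hj
    have := (Nat.find_spec hex).2
    omega
  · exact ⟨N, le_rfl, fun j hj => by simpa [hj] using mt (fun h => ⟨j, h, hj⟩) hex,
      fun h => absurd h (lt_irrefl N)⟩

/-- `L` is a lattice path from `a` to `b`. -/
structure IsPath (a b : ℕ × ℕ) (L : List (ℕ × ℕ)) : Prop where
  chain : L.IsChain RootStep
  head : L.head? = some a
  last : L.getLast? = some b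

/-- The horizontal path from `(p, i + a)` to `(p, i + b)`. -/
def rowPath (i p a b : ℕ) : List (ℕ × ℕ) := (List.range' a (b + 1 - a)).map fun q => (p, i + q)

/-- All lattice paths from `(p, i + a)` to `(p + k, i + b)`, enumerated by the columns in which they
leave the rows. -/
def paths (i p : ℕ) : ℕ → ℕ → ℕ → List (List (ℕ × ℕ))
  | 0, a, b => if a ≤ b then [rowPath i p a b] else []
  | k + 1, a, b => (List.range' a (b + 1 - a)).flatMap fun c =>
      (paths i (p + 1) k c b).map (rowPath i p a c ++ ·)

section Paths

variable {n i p k a b u : ℕ} {L L₁ L₂ : List (ℕ × ℕ)}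

theorem IsPath.singleton (x : ℕ × ℕ) : IsPath x x [x] :=
  ⟨List.isChain_singleton x, rfl, rfl⟩

theorem IsPath.cons {x y z : ℕ × ℕ} (h : IsPath y z L) (hxy : RootStep x y) :
    IsPath x z (x :: L) := by
  obtain ⟨hc, hh, hl⟩ := h
  cases L with
  | nil => simp at hh
  | cons w L =>
    obtain rfl : w = y := by simpa using hh
    exact ⟨List.isChain_cons_cons.2 ⟨hxy, hc⟩, rfl, by rwa [List.getLast?_cons_cons]⟩

theorem IsPath.of_cons {x y z : ℕ × ℕ} (h : IsPath x y (z :: L)) :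
    z = x ∧ (L = [] ∧ x = y ∨ ∃ w, RootStep x w ∧ IsPath w y L) := by
  obtain ⟨hc, hh, hl⟩ := h
  obtain rfl : z = x := by simpa using hh
  cases L with
  | nil => exact ⟨rfl, .inl ⟨rfl, by simpa using hl⟩⟩
  | cons w L =>
    obtain ⟨hzw, hc⟩ := List.isChain_cons_cons.1 hc
    exact ⟨rfl, .inr ⟨w, hzw, hc, rfl, by rwa [List.getLast?_cons_cons] at hl⟩⟩

theorem rowPath_self (i p a : ℕ) : rowPath i p a a = [(p, i + a)] := by
  simp [rowPath]

theorem rowPath_cons (h : a ≤ b) :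
    rowPath i p a b = (p, i + a) :: rowPath i p (a + 1) b := by
  rw [rowPath, rowPath, Nat.add_sub_add_right, Nat.sub_add_comm h, List.range'_succ, List.map_cons]

theorem mem_rowPath {c : ℕ × ℕ} :
    c ∈ rowPath i p a b ↔ c.1 = p ∧ i + a ≤ c.2 ∧ c.2 ≤ i + b := by
  rw [rowPath, List.mem_map]
  constructor
  · rintro ⟨q, hq, rfl⟩
    rw [List.mem_range'_1] at hq
    exact ⟨rfl, by omega, by omega⟩
  · rintro ⟨rfl, h₁, h₂⟩
    exact ⟨c.2 - i, List.mem_range'_1.2 (by omega), Prod.ext rfl (Nat.add_sub_cancel' (by omega))⟩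

theorem sum_rowPath (s : ℕ × ℕ → ℕ) :
    ((rowPath i p a b).map s).sum = ∑ j ∈ Finset.Ico a (b + 1), s (p, i + j) := by
  rw [rowPath, List.map_map]
  rfl

theorem mem_paths_zero : L ∈ paths i p 0 a b ↔ a ≤ b ∧ L = rowPath i p a b := by
  rw [paths]
  split_ifs with h <;> simp [h]

theorem mem_paths_succ : L ∈ paths i p (k + 1) a b ↔
    ∃ c, a ≤ c ∧ c ≤ b ∧ ∃ L' ∈ paths i (p + 1) k c b, rowPath i p a c ++ L' = L := by
  simp only [paths, List.mem_flatMap, List.mem_range'_1, List.mem_map, and_assoc]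
  exact exists_congr fun c => and_congr_right fun h => and_congr_left fun _ => by omega

theorem bounds_of_mem_paths (hL : L ∈ paths i p k a b) {c : ℕ × ℕ} (hc : c ∈ L) :
    p ≤ c.1 ∧ c.1 ≤ p + k ∧ i + a ≤ c.2 ∧ c.2 ≤ i + b := by
  induction k generalizing p a L with
  | zero =>
    obtain ⟨-, rfl⟩ := mem_paths_zero.1 hL
    have := mem_rowPath.1 hc
    omega
  | succ k ih =>
    obtain ⟨q, haq, hqb, L', hL', rfl⟩ := mem_paths_succ.1 hL
    obtain hc | hc := List.mem_append.1 hc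
    · have := mem_rowPath.1 hc
      omega
    · have := ih hL' hc
      omega

theorem cons_mem_paths (hL : L ∈ paths i p k (a + 1) b) : (p, i + a) :: L ∈ paths i p k a b := by
  cases k with
  | zero =>
    obtain ⟨hab, rfl⟩ := mem_paths_zero.1 hL
    exact mem_paths_zero.2 ⟨by omega, (rowPath_cons (by omega)).symm⟩
  | succ k =>
    obtain ⟨c, hac, hcb, L', hL', rfl⟩ := mem_paths_succ.1 hL
    exact mem_paths_succ.2 ⟨c, by omega, hcb, L', hL', by rw [rowPath_cons (by omega)]; rfl⟩

theorem cons_mem_paths_succ (hab : a ≤ b) (hL : L ∈ paths i (p + 1) k a b) :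
    (p, i + a) :: L ∈ paths i p (k + 1) a b :=
  mem_paths_succ.2 ⟨a, le_rfl, hab, L, hL, by rw [rowPath_self]; rfl⟩

theorem isPath_rowPath_append {y : ℕ × ℕ} (h : a ≤ b) (hL : IsPath (p + 1, i + b) y L) :
    IsPath (p, i + a) y (rowPath i p a b ++ L) := by
  induction h using Nat.decreasingInduction with
  | self => exact rowPath_self i p b ▸ hL.cons (.inr ⟨rfl, rfl⟩)
  | of_succ k hk ih =>
    rw [rowPath_cons hk.le]
    exact ih.cons (.inl ⟨rfl, rfl⟩)

theorem isPath_rowPath (h : a ≤ b) : IsPath (p, i + a) (p, i + b) (rowPath i p a b) := by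
  induction h using Nat.decreasingInduction with
  | self => exact rowPath_self i p b ▸ .singleton _
  | of_succ k hk ih =>
    rw [rowPath_cons hk.le]
    exact ih.cons (.inl ⟨rfl, rfl⟩)

theorem IsPath.le {x y : ℕ × ℕ} (h : IsPath x y L) : x ≤ y := by
  induction L generalizing x with
  | nil => simpa using h.head
  | cons z L ih =>
    obtain ⟨-, ⟨-, rfl⟩ | ⟨w, hw, h⟩⟩ := h.of_cons
    · rfl
    · refine le_trans ?_ (ih h)
      rw [Prod.le_def]
      obtain hw | hw := hw <;> omega

theorem isPath_of_mem_paths (h : L ∈ paths i p k a b) :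
    IsPath (p, i + a) (p + k, i + b) L := by
  induction k generalizing p a L with
  | zero =>
    obtain ⟨hab, rfl⟩ := mem_paths_zero.1 h
    exact isPath_rowPath hab
  | succ k ih =>
    obtain ⟨c, hac, -, L', hL', rfl⟩ := mem_paths_succ.1 h
    exact isPath_rowPath_append hac (by simpa only [add_assoc, add_comm 1] using ih hL')

theorem mem_paths_of_isPath (h : IsPath (p, i + a) (p + k, i + b) L) : L ∈ paths i p k a b := by
  induction L generalizing p k a with
  | nil => simpa using h.head
  | cons z L ih =>
    obtain ⟨rfl, ⟨rfl, heq⟩ | ⟨⟨p', q⟩, hstep, hL⟩⟩ := h.of_cons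
    · obtain ⟨rfl, rfl⟩ : k = 0 ∧ a = b := by simpa using heq
      exact mem_paths_zero.2 ⟨le_rfl, (rowPath_self i p a).symm⟩
    have hle : p' ≤ p + k ∧ q ≤ i + b := hL.le
    obtain ⟨rfl, rfl⟩ | ⟨rfl, rfl⟩ :
      p' = p ∧ q = i + (a + 1) ∨ p' = p + 1 ∧ q = i + a := hstep
    · exact cons_mem_paths (ih hL)
    · obtain ⟨k, rfl⟩ : ∃ k', k = k' + 1 := ⟨k - 1, by omega⟩
      exact cons_mem_paths_succ (by omega) (ih (by rwa [add_assoc, add_comm 1]))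

theorem mem_paths : L ∈ paths i p k a b ↔ IsPath (p, i + a) (p + k, i + b) L :=
  ⟨isPath_of_mem_paths, mem_paths_of_isPath⟩

theorem isType1_iff (hi : 1 ≤ i) (hn : 2 * n = 2 * i + (u + 1)) : IsType1 n i L ↔
    L ∈ paths i 1 (i - 1) 0 u ∨ L ∈ paths i 1 (i - 1) 1 (u + 1) := by
  have hrow : 1 + (i - 1) = i := by omega
  constructor
  · rintro ⟨-, hc, -, ⟨hh, hl⟩ | ⟨hh, hl⟩⟩
    · rw [show 2 * n - i - 1 = i + u by omega] at hl
      exact .inl (mem_paths.2 ⟨hc, hh, by rwa [hrow]⟩)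
    · rw [show 2 * n - i = i + (u + 1) by omega] at hl
      exact .inr (mem_paths.2 ⟨hc, hh, by rwa [hrow]⟩)
  · intro hL
    have hR : ∀ c ∈ L, inR n i c := fun c hc => by
      unfold inR
      obtain hL | hL := hL <;> have := bounds_of_mem_paths hL hc <;> omega
    obtain hL | hL := hL <;> obtain ⟨hc, hh, hl⟩ := mem_paths.1 hL <;>
      rw [hrow] at hl <;> refine ⟨by rintro rfl; simp at hh, hc, hR, ?_⟩
    · exact .inl ⟨hh, by rwa [show 2 * n - i - 1 = i + u by omega]⟩
    · exact .inr ⟨hh, by rwa [show 2 * n - i = i + (u + 1) by omega]⟩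

theorem isType2_iff (hin : i ≤ n) : IsType2 n i L₁ L₂ ↔ ∃ j, j + 1 < i ∧
    L₁ ∈ paths i 1 j 0 (2 * n - i - (j + 1)) ∧ L₂ ∈ paths i 2 j 0 (2 * n - i - (j + 2)) ∧
    (∀ c ∈ L₁, c ∉ L₂) := by
  constructor
  · rintro ⟨j, hj, hji, -, -, hc₁, hc₂, -, -, hh₁, hh₂, hl₁, hl₂, hdisj⟩
    obtain ⟨j, rfl⟩ := Nat.exists_eq_add_of_le hj
    refine ⟨j, by omega, mem_paths.2 ⟨hc₁, hh₁, ?_⟩, mem_paths.2 ⟨hc₂, hh₂, ?_⟩,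
      fun c h₁ h₂ => hdisj c ⟨h₁, h₂⟩⟩
    · rwa [show i + (2 * n - i - (j + 1)) = 2 * n - (1 + j) by omega]
    · rwa [show i + (2 * n - i - (j + 2)) = 2 * n - (1 + j) - 1 by omega,
        show 2 + j = 1 + j + 1 by omega]
  · rintro ⟨j, hji, hL₁, hL₂, hdisj⟩
    obtain ⟨hc₁, hh₁, hl₁⟩ := mem_paths.1 hL₁
    obtain ⟨hc₂, hh₂, hl₂⟩ := mem_paths.1 hL₂
    rw [show i + (2 * n - i - (j + 1)) = 2 * n - (1 + j) by omega] at hl₁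
    rw [show i + (2 * n - i - (j + 2)) = 2 * n - (1 + j) - 1 by omega,
      show 2 + j = 1 + j + 1 by omega] at hl₂
    refine ⟨1 + j, by omega, by omega, by rintro rfl; simp at hh₁, by rintro rfl; simp at hh₂,
      hc₁, hc₂, fun c hc => ?_, fun c hc => ?_, hh₁, hh₂, hl₁, hl₂,
      fun c hc => hdisj c hc.1 hc.2⟩ <;> unfold inR
    · have := bounds_of_mem_paths hL₁ hc
      omega
    · have := bounds_of_mem_paths hL₂ hc
      omega

end Paths

section PathInequalities

variable {n i u m : ℕ} {s : ℕ × ℕ → ℕ}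

theorem forall_mem_paths_zero {p a b : ℕ} {P : List (ℕ × ℕ) → Prop} :
    (∀ L ∈ paths i p 0 a b, P L) ↔ (a ≤ b → P (rowPath i p a b)) := by
  simp only [mem_paths_zero, and_imp, forall_eq_apply_imp_iff]

theorem forall_mem_paths_succ {p k a b : ℕ} {P : List (ℕ × ℕ) → Prop} :
    (∀ L ∈ paths i p (k + 1) a b, P L) ↔
      ∀ c, a ≤ c → c ≤ b → ∀ L ∈ paths i (p + 1) k c b, P (rowPath i p a c ++ L) := by
  simp only [mem_paths_succ]
  constructor
  · exact fun h c hac hcb L hL => h _ ⟨c, hac, hcb, L, hL, rfl⟩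
  · rintro h _ ⟨c, hac, hcb, L, hL, rfl⟩
    exact h c hac hcb L hL

theorem mem_SD_iff_paths (hi : 1 ≤ i) (hn : 2 * n = 2 * i + (u + 1)) :
    s ∈ SD n i m ↔ (∀ β, ¬inR n i β → s β = 0) ∧
      (∀ L ∈ paths i 1 (i - 1) 0 u, (L.map s).sum ≤ m) ∧
      (∀ L ∈ paths i 1 (i - 1) 1 (u + 1), (L.map s).sum ≤ m) ∧
      ∀ j, j + 1 < i → ∀ L₁ ∈ paths i 1 j 0 (u + i - j), ∀ L₂ ∈ paths i 2 j 0 (u + i - (j + 1)),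
        (∀ c ∈ L₁, c ∉ L₂) → (L₁.map s).sum + (L₂.map s).sum ≤ 2 * m := by
  simp only [SD, Set.mem_ofPred_eq, isType1_iff hi hn, isType2_iff (show i ≤ n by omega), or_imp,
    forall_and, and_assoc, List.map_append, List.sum_append]
  refine and_congr_right fun _ => and_congr_right fun _ => and_congr_right fun _ => ?_
  have hcB : ∀ j, j + 1 < i → m * cB n i = 2 * m := fun j hj => by
    rw [cB, if_neg (by omega), mul_comm]
  have hcol : ∀ j, 2 * n - i - (j + 1) = u + i - j := fun j => by omega
  simp only [hcol]
  constructor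
  · exact fun h j hj L₁ h₁ L₂ h₂ hd => (h L₁ L₂ ⟨j, hj, h₁, h₂, hd⟩).trans_eq (hcB j hj)
  · rintro h L₁ L₂ ⟨j, hj, h₁, h₂, hd⟩
    exact (h j hj L₁ h₁ L₂ h₂ hd).trans_eq (hcB j hj).symm

theorem mem_SD_three (hn : 2 * n = 2 * 3 + (u + 1)) :
    s ∈ SD n 3 m ↔ (∀ β, ¬inR n 3 β → s β = 0) ∧
      (∀ σ τ, σ ≤ τ → τ ≤ u → ∑ j ∈ Finset.Ico 0 (σ + 1), s (1, 3 + j) +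
        (∑ j ∈ Finset.Ico σ (τ + 1), s (2, 3 + j) +
          ∑ j ∈ Finset.Ico τ (u + 1), s (3, 3 + j)) ≤ m) ∧
      (∀ σ τ, 1 ≤ σ → σ ≤ τ → τ ≤ u + 1 → ∑ j ∈ Finset.Ico 1 (σ + 1), s (1, 3 + j) +
        (∑ j ∈ Finset.Ico σ (τ + 1), s (2, 3 + j) +
          ∑ j ∈ Finset.Ico τ (u + 2), s (3, 3 + j)) ≤ m) ∧
      (∀ σ τ, τ < σ → σ ≤ u + 2 → ∑ j ∈ Finset.Ico 0 (σ + 1), s (1, 3 + j) +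
        ∑ j ∈ Finset.Ico σ (u + 3), s (2, 3 + j) +
        (∑ j ∈ Finset.Ico 0 (τ + 1), s (2, 3 + j) +
          ∑ j ∈ Finset.Ico τ (u + 2), s (3, 3 + j)) ≤ 2 * m) ∧
      ∑ j ∈ Finset.Ico 0 (u + 4), s (1, 3 + j) + ∑ j ∈ Finset.Ico 0 (u + 3), s (2, 3 + j) ≤
        2 * m := by
  rw [mem_SD_iff_paths (by norm_num) hn]
  have hj : ∀ j, j + 1 < 3 ↔ j = 0 ∨ j = 1 := by omega
  simp only [hj, or_imp, forall_and, forall_eq, forall_mem_paths_succ, forall_mem_paths_zero,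
    List.map_append, List.sum_append, sum_rowPath]
  refine and_congr_right fun _ => and_congr ?_ (and_congr ?_ (and_comm.trans (and_congr ?_ ?_)))
  · exact ⟨fun h σ τ hστ hτ => h σ (Nat.zero_le σ) (hστ.trans hτ) τ hστ hτ hτ,
      fun h σ _ _ τ hστ hτ _ => h σ τ hστ hτ⟩
  · exact ⟨fun h σ τ hσ hστ hτ => h σ hσ (hστ.trans hτ) τ hστ hτ hτ,
      fun h σ hσ _ τ hστ hτ _ => h σ τ hσ hστ hτ⟩
  · have hdisj : ∀ σ τ, σ ≤ u + 2 →
        ((∀ x ∈ rowPath 3 1 0 σ ++ rowPath 3 2 σ (u + 2),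
          x ∉ rowPath 3 2 0 τ ++ rowPath 3 3 τ (u + 1)) ↔ τ < σ) := by
      intro σ τ hσ
      simp only [List.mem_append, mem_rowPath]
      refine ⟨fun h => ?_, fun h x => by omega⟩
      have := h (2, 3 + σ)
      omega
    exact ⟨fun h σ τ hτσ hσ => h σ (Nat.zero_le σ) hσ hσ τ (Nat.zero_le τ) (by omega) (by omega)
        ((hdisj σ τ hσ).2 hτσ),
      fun h σ _ hσ _ τ _ _ _ hd => h σ τ ((hdisj σ τ hσ).1 hd) hσ⟩
  · refine ⟨fun h => h (Nat.zero_le _) (Nat.zero_le _) fun x => ?_, fun h _ _ _ => h⟩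
    simp only [mem_rowPath]
    omega

theorem mem_SD_two (hn : 2 * n = 2 * 2 + (u + 1)) :
    s ∈ SD n 2 m ↔ (∀ β, ¬inR n 2 β → s β = 0) ∧
      (∀ τ ≤ u, ∑ j ∈ Finset.Ico 0 (τ + 1), s (1, 2 + j) +
        ∑ j ∈ Finset.Ico τ (u + 1), s (2, 2 + j) ≤ m) ∧
      (∀ τ, 1 ≤ τ → τ ≤ u + 1 → ∑ j ∈ Finset.Ico 1 (τ + 1), s (1, 2 + j) +
        ∑ j ∈ Finset.Ico τ (u + 2), s (2, 2 + j) ≤ m) ∧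
      ∑ j ∈ Finset.Ico 0 (u + 3), s (1, 2 + j) + ∑ j ∈ Finset.Ico 0 (u + 2), s (2, 2 + j) ≤
        2 * m := by
  rw [mem_SD_iff_paths (by norm_num) hn]
  have hj : ∀ j, j + 1 < 2 ↔ j = 0 := by omega
  simp only [hj, forall_eq, forall_mem_paths_succ, forall_mem_paths_zero, List.map_append,
    List.sum_append, sum_rowPath]
  refine and_congr_right fun _ => and_congr ?_ (and_congr ?_ ?_)
  · exact ⟨fun h τ hτ => h τ (Nat.zero_le τ) hτ hτ, fun h τ _ hτ _ => h τ hτ⟩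
  · exact ⟨fun h τ h1 hτ => h τ h1 hτ hτ, fun h τ h1 hτ _ => h τ h1 hτ⟩
  · refine ⟨fun h => h (Nat.zero_le _) (Nat.zero_le _) fun x => ?_, fun h _ _ _ => h⟩
    simp only [mem_rowPath]
    omega

theorem mem_SD_one (hn : 2 * n = 2 * 1 + (u + 1)) :
    s ∈ SD n 1 m ↔ (∀ β, ¬inR n 1 β → s β = 0) ∧
      ∑ j ∈ Finset.Ico 0 (u + 1), s (1, 1 + j) ≤ m ∧
      ∑ j ∈ Finset.Ico 1 (u + 2), s (1, 1 + j) ≤ m := by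
  rw [mem_SD_iff_paths le_rfl hn]
  have hj : ∀ j, ¬j + 1 < 1 := by omega
  simp only [hj, false_imp_iff, implies_true, and_true, forall_mem_paths_zero, sum_rowPath]
  exact and_congr_right fun _ => and_congr (forall_prop_of_true (Nat.zero_le u))
    (forall_prop_of_true (Nat.le_add_left 1 u))

end PathInequalities

/-- The entries of the last three rows of `R_i^+`: row `0`, `1`, `2` and column `j` stand for the
roots `α_{i-2,i+j}`, `α_{i-1,i+j}`, `α_{i,i+j}`. -/
abbrev Rows := Fin 3 → ℕ → ℕ

namespace Rows

/-- The array with the single entry `e` in row `r` and column `p`. -/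
def cell (r : Fin 3) (p e : ℕ) : Rows := Pi.single r (Pi.single p e)

/-- The weight of the path that starts at column `0` of row `0`, drops to row `1` at once, and
drops to row `2` in column `τ`, where it ends in column `u`. -/
def lead (u : ℕ) (t : Rows) (τ : ℕ) : ℕ :=
  t 0 0 + ∑ j ∈ Finset.range (τ + 1), t 1 j + ∑ j ∈ Finset.Ico τ (u + 1), t 2 j

/-- The weight of the path that starts at column `1` of row `0`, drops to row `1` in column `σ`,
and drops to row `2` in column `u + 1`, where it ends. The value at `σ = 0` is a convention that
extends `trail_succ`. -/
def trail (u : ℕ) (t : Rows) (σ : ℕ) : ℕ :=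
  ∑ j ∈ Finset.Ico 1 (σ + 1), t 0 j + ∑ j ∈ Finset.Ico σ (u + 2), t 1 j + t 2 (u + 1)

/-- The sum of row `1` up to column `u + 1`. -/
def mid (u : ℕ) (t : Rows) : ℕ := ∑ j ∈ Finset.range (u + 2), t 1 j

section Sums

variable {u : ℕ} {t t' : Rows}

@[grind =] theorem cell_apply (r r' : Fin 3) (p p' e : ℕ) :
    cell r p e r' p' = if r' = r ∧ p' = p then e else 0 := by
  rcases eq_or_ne r' r with rfl | hr <;> simp [cell, Pi.single_apply, *]

@[grind =] theorem add_apply_apply (r : Fin 3) (p : ℕ) : (t + t') r p = t r p + t' r p := rfl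

theorem cell_le {r : Fin 3} {p e : ℕ} (h : e ≤ t r p) : cell r p e ≤ t := by
  intro r' p'
  rw [cell_apply]
  split_ifs with hrp
  · rwa [hrp.1, hrp.2]
  · exact Nat.zero_le _

theorem add_cell_le {r : Fin 3} {p e : ℕ} (ht : t' ≤ t) (h : t' r p + e ≤ t r p) :
    t' + cell r p e ≤ t := by
  intro r' p'
  rw [Pi.add_apply, Pi.add_apply, cell_apply]
  split_ifs with hrp
  · rwa [hrp.1, hrp.2]
  · exact ht r' p'

@[grind =] theorem lead_add (τ : ℕ) : lead u (t + t') τ = lead u t τ + lead u t' τ := by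
  simp only [lead, Pi.add_apply, Finset.sum_add_distrib]
  ring

@[grind =] theorem trail_add (σ : ℕ) : trail u (t + t') σ = trail u t σ + trail u t' σ := by
  simp only [trail, Pi.add_apply, Finset.sum_add_distrib]
  ring

@[grind =] theorem mid_add : mid u (t + t') = mid u t + mid u t' := by
  simp only [mid, Pi.add_apply, Finset.sum_add_distrib]

@[grind =] theorem lead_cell (r : Fin 3) (p e τ : ℕ) : lead u (cell r p e) τ =
    if r = 0 ∧ p = 0 ∨ r = 1 ∧ p ≤ τ ∨ r = 2 ∧ τ ≤ p ∧ p ≤ u then e else 0 := by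
  fin_cases r <;> simp [lead, cell, Pi.single_apply, eq_comm]

@[grind =] theorem trail_cell (r : Fin 3) (p e σ : ℕ) : trail u (cell r p e) σ =
    if r = 0 ∧ 1 ≤ p ∧ p ≤ σ ∨ r = 1 ∧ σ ≤ p ∧ p ≤ u + 1 ∨ r = 2 ∧ p = u + 1
      then e else 0 := by
  fin_cases r <;>
    simp [trail, cell, Pi.single_apply, eq_comm, Nat.lt_succ_iff]

@[grind =] theorem mid_cell (r : Fin 3) (p e : ℕ) :
    mid u (cell r p e) = if r = 1 ∧ p ≤ u + 1 then e else 0 := by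
  fin_cases r <;> simp [mid, cell, Finset.sum_pi_single', Nat.lt_succ_iff]

theorem lead_succ {τ : ℕ} (hτ : τ ≤ u) :
    lead u t (τ + 1) + t 2 τ = lead u t τ + t 1 (τ + 1) := by
  simp only [lead, Finset.sum_range_succ _ (τ + 1),
    Finset.sum_eq_sum_Ico_succ_bot (Nat.lt_succ_of_le hτ)]
  ring

theorem lead_last : lead u t (u + 1) = t 0 0 + mid u t := by
  simp [lead, mid]

theorem trail_succ {σ : ℕ} (hσ : σ ≤ u + 1) :
    trail u t (σ + 1) + t 1 σ = trail u t σ + t 0 (σ + 1) := by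
  simp only [trail, Finset.sum_Ico_succ_top (Nat.le_add_left 1 σ),
    Finset.sum_eq_sum_Ico_succ_bot (Nat.lt_succ_of_le hσ)]
  ring

theorem trail_zero : trail u t 0 = mid u t + t 2 (u + 1) := by
  simp [trail, mid]

theorem lead_mono_of_eq_zero {τ τ' : ℕ} (hle : τ ≤ τ') (hτ' : τ' ≤ u + 1)
    (h0 : ∀ j, τ ≤ j → j < τ' → t 2 j = 0) : lead u t τ ≤ lead u t τ' := by
  induction τ', hle using Nat.le_induction with
  | base => rfl
  | succ k hk ih =>
    have := ih (by omega) fun j h1 h2 => h0 j h1 (by omega)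
    have := lead_succ (t := t) (show k ≤ u by omega)
    have := h0 k hk (by omega)
    omega

theorem lead_anti_of_eq_zero {τ τ' : ℕ} (hle : τ ≤ τ') (hτ' : τ' ≤ u + 1)
    (h0 : ∀ j, τ < j → j ≤ τ' → t 1 j = 0) : lead u t τ' ≤ lead u t τ := by
  induction τ', hle using Nat.le_induction with
  | base => rfl
  | succ k hk ih =>
    have := ih (by omega) fun j h1 h2 => h0 j h1 (by omega)
    have := lead_succ (t := t) (show k ≤ u by omega)
    have := h0 (k + 1) (by omega) le_rfl
    omega

theorem lead_lt_lead_of_pos {τ τ' : ℕ} (hlt : τ < τ') (hτ' : τ' ≤ u + 1)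
    (h0 : ∀ j, τ < j → j ≤ τ' → t 1 j = 0) (hpos : 0 < t 2 τ) : lead u t τ' < lead u t τ := by
  have hanti : lead u t τ' ≤ lead u t (τ + 1) :=
    lead_anti_of_eq_zero hlt hτ' fun j h1 h2 => h0 j (by omega) h2
  have := lead_succ (t := t) (show τ ≤ u by omega)
  have := h0 (τ + 1) (by omega) hlt
  omega

theorem trail_mono_of_eq_zero {σ σ' : ℕ} (hle : σ ≤ σ') (hσ' : σ' ≤ u + 2)
    (h0 : ∀ j, σ ≤ j → j < σ' → t 1 j = 0) : trail u t σ ≤ trail u t σ' := by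
  induction σ', hle using Nat.le_induction with
  | base => rfl
  | succ k hk ih =>
    have := ih (by omega) fun j h1 h2 => h0 j h1 (by omega)
    have := trail_succ (t := t) (show k ≤ u + 1 by omega)
    have := h0 k hk (by omega)
    omega

theorem trail_anti_of_eq_zero {σ σ' : ℕ} (hle : σ ≤ σ') (hσ' : σ' ≤ u + 2)
    (h0 : ∀ j, σ < j → j ≤ σ' → t 0 j = 0) : trail u t σ' ≤ trail u t σ := by
  induction σ', hle using Nat.le_induction with
  | base => rfl
  | succ k hk ih =>
    have := ih (by omega) fun j h1 h2 => h0 j h1 (by omega)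
    have := trail_succ (t := t) (show k ≤ u + 1 by omega)
    have := h0 (k + 1) (by omega) le_rfl
    omega

theorem lead_add_trail_last_le {A B τ : ℕ} (hlead : ∀ τ ≤ u, lead u t τ ≤ A)
    (htrail : trail u t (u + 1) ≤ B) (hτ : τ ≤ u + 1) :
    lead u t τ + trail u t (u + 2) ≤ A + B + t 0 (u + 2) := by
  have : trail u t (u + 2) + t 1 (u + 1) = trail u t (u + 1) + t 0 (u + 2) := trail_succ le_rfl
  obtain rfl | hτ : τ = u + 1 ∨ τ ≤ u := by omega
  · have := lead_succ (t := t) (le_refl u)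
    have := hlead u le_rfl
    omega
  · have := hlead τ hτ
    omega

end Sums

/-- The Dyck path inequalities of level `m` for three rows that do not involve the last column
of row `0`. The inequalities `inner` encode all type 1 paths that are neither a `lead` nor a
`trail`, and `double` encodes all double paths with `j = 2`. -/
structure Core (u m : ℕ) (t : Rows) : Prop where
  lead_le : ∀ τ ≤ u, lead u t τ ≤ m
  trail_le : ∀ σ, 1 ≤ σ → σ ≤ u + 1 → trail u t σ ≤ m
  inner : ∀ σ τ, 1 ≤ σ → σ ≤ τ → τ ≤ u →
    lead u t τ + trail u t σ ≤ m + mid u t + min (t 0 0) (t 2 (u + 1))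
  double : ∀ σ τ, τ < σ → σ ≤ u + 2 → lead u t τ + trail u t σ + t 1 (u + 2) ≤ 2 * m

/-- `t'` can be split off from `t` at level `d`, leaving a point of level `m - d`. -/
structure Peel (u m d : ℕ) (t t' : Rows) : Prop where
  level_le : d ≤ m
  le : t' ≤ t
  core : Core u d t'
  core_sub : Core u (m - d) (t - t')

theorem Peel.of_le {u m d : ℕ} {t t' : Rows} (hle : t' ≤ t)
    (lead_le : ∀ τ ≤ u, lead u t' τ ≤ d ∧ lead u t τ + d ≤ m + lead u t' τ)
    (trail_le : ∀ σ, 1 ≤ σ → σ ≤ u + 1 →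
      trail u t' σ ≤ d ∧ trail u t σ + d ≤ m + trail u t' σ)
    (inner : ∀ σ τ, 1 ≤ σ → σ ≤ τ → τ ≤ u →
      lead u t' τ + trail u t' σ ≤ d + mid u t' + min (t' 0 0) (t' 2 (u + 1)) ∧
      lead u t τ + trail u t σ + mid u t' + d ≤ m + mid u t + (lead u t' τ + trail u t' σ) +
        min (t 0 0 - t' 0 0) (t 2 (u + 1) - t' 2 (u + 1)))
    (double : ∀ σ τ, τ < σ → σ ≤ u + 2 →
      lead u t' τ + trail u t' σ + t' 1 (u + 2) ≤ 2 * d ∧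
      lead u t τ + trail u t σ + t 1 (u + 2) + 2 * d ≤
        2 * m + (lead u t' τ + trail u t' σ + t' 1 (u + 2))) :
    Peel u m d t t' := by
  obtain ⟨t, rfl⟩ := exists_add_of_le hle
  simp only [lead_add, trail_add, mid_add, Pi.add_apply, add_tsub_cancel_left] at *
  have hlevel := lead_le 0 (Nat.zero_le u)
  refine ⟨by omega, hle, ⟨fun τ h => (lead_le τ h).1, fun σ h1 h2 => (trail_le σ h1 h2).1,
    fun σ τ h1 h2 h3 => (inner σ τ h1 h2 h3).1, fun σ τ h1 h2 => (double σ τ h1 h2).1⟩, ?_⟩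
  rw [add_tsub_cancel_left]
  constructor
  · intro τ hτ
    have := lead_le τ hτ
    omega
  · intro σ h1 h2
    have := trail_le σ h1 h2
    omega
  · intro σ τ h1 h2 h3
    have := inner σ τ h1 h2 h3
    omega
  · intro σ τ h1 h2
    have := double σ τ h1 h2
    omega

namespace Core

variable {u m : ℕ} {t : Rows}

theorem trail_le_of_last_le (h : Core u m t) (hlast : trail u t (u + 2) ≤ m) {σ : ℕ}
    (hσ0 : 1 ≤ σ) (hσ : σ ≤ u + 2) : trail u t σ ≤ m := by
  obtain rfl | hσ : σ = u + 2 ∨ σ ≤ u + 1 := by omega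
  · exact hlast
  · exact h.trail_le σ hσ0 hσ

theorem peel_slack (h : Core u m t) (hlead : ∀ τ ≤ u, lead u t τ < m + t 0 0)
    (htrail : ∀ σ, 1 ≤ σ → σ ≤ u + 1 → trail u t σ < m + t 2 (u + 1))
    (hinner : ∀ σ τ, 1 ≤ σ → σ ≤ τ → τ ≤ u →
      lead u t τ + trail u t σ < m + mid u t + t 0 0 + t 2 (u + 1)) :
    ∃ t', Peel u m 1 t t' := by
  obtain ⟨e, he, he1, he'⟩ : ∃ e ≤ t 0 0, e ≤ 1 ∧ (e = 1 ∨ t 0 0 = 0) :=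
    ⟨min (t 0 0) 1, by omega⟩
  obtain ⟨f, hf, hf1, hf'⟩ : ∃ f ≤ t 2 (u + 1), f ≤ 1 ∧ (f = 1 ∨ t 2 (u + 1) = 0) :=
    ⟨min (t 2 (u + 1)) 1, by omega⟩
  obtain ⟨y, hy, hy2, hy'⟩ : ∃ y ≤ t 1 (u + 2), e + f + y ≤ 2 ∧
      (e + f + y = 2 ∨ y = t 1 (u + 2)) := ⟨min (t 1 (u + 2)) (2 - e - f), by omega⟩
  obtain ⟨x, hx, hx2, hx'⟩ : ∃ x ≤ t 0 (u + 2), e + f + y + x ≤ 2 ∧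
      (e + f + y + x = 2 ∨ x = t 0 (u + 2)) := ⟨min (t 0 (u + 2)) (2 - e - f - y), by omega⟩
  have hlead_e : ∀ τ ≤ u, lead u t τ ≤ m + e - 1 := fun τ hτ => by
    have := h.lead_le τ hτ
    have := hlead τ hτ
    omega
  have htrail_f : ∀ σ, 1 ≤ σ → σ ≤ u + 1 → trail u t σ ≤ m + f - 1 := fun σ h1 h2 => by
    have := h.trail_le σ h1 h2
    have := htrail σ h1 h2
    omega
  have hpos : 1 ≤ m + e ∧ 1 ≤ m + f := by
    have := hlead 0 (Nat.zero_le u)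
    have := htrail 1 le_rfl (by omega)
    omega
  refine ⟨cell 0 0 e + cell 0 (u + 2) x + cell 1 (u + 2) y + cell 2 (u + 1) f,
    .of_le ?_ (fun τ hτ => ?_) (fun σ h1 h2 => ?_) (fun σ τ h1 h2 h3 => ?_) fun σ τ h1 h2 => ?_⟩
  · refine add_cell_le (add_cell_le (add_cell_le (cell_le he) ?_) ?_) ?_ <;> grind
  · have := hlead_e τ hτ
    clear hlead htrail hinner hlead_e htrail_f
    grind
  · have := htrail_f σ h1 h2
    clear hlead htrail hinner hlead_e htrail_f
    grind
  · have := h.inner σ τ h1 h2 h3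
    have := hinner σ τ h1 h2 h3
    clear hlead htrail hinner hlead_e htrail_f
    grind
  · have := h.double σ τ h1 h2
    have hlast := lead_add_trail_last_le hlead_e (htrail_f (u + 1) (by omega) le_rfl)
      (show τ ≤ u + 1 by omega)
    have := hlead_e τ
    have := htrail_f σ
    clear hlead htrail hinner hlead_e htrail_f
    rcases h2.eq_or_lt with rfl | hσ
    · grind
    · grind

theorem peel_ends (h : Core u m t) (h0 : 0 < t 0 0 ∨ 0 < t 1 0)
    (h1 : 0 < t 2 (u + 1) ∨ 0 < t 1 (u + 1))
    (hmid : t 0 0 = 0 → t 2 (u + 1) = 0 → m < mid u t)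
    (hdouble : ∀ τ ≤ u, lead u t τ + trail u t (u + 2) + t 1 (u + 2) < 2 * m + t 2 (u + 1)) :
    ∃ t', Peel u m 1 t t' := by
  obtain ⟨e, he, he1, hb, he'⟩ : ∃ e ≤ t 0 0, e ≤ 1 ∧ 1 - e ≤ t 1 0 ∧ (e = 1 ∨ t 0 0 = 0) :=
    ⟨min (t 0 0) 1, by omega⟩
  obtain ⟨f, hf, hf1, hb', hf'⟩ : ∃ f ≤ t 2 (u + 1), f ≤ 1 ∧ 1 - f ≤ t 1 (u + 1) ∧
      (f = 1 ∨ t 2 (u + 1) = 0) := ⟨min (t 2 (u + 1)) 1, by omega⟩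
  refine ⟨cell 0 0 e + cell 1 0 (1 - e) + cell 1 (u + 1) (1 - f) + cell 2 (u + 1) f,
    .of_le ?_ ?_ ?_ ?_ ?_⟩
  · refine add_cell_le (add_cell_le (add_cell_le (cell_le he) ?_) ?_) ?_ <;> grind
  · intro τ hτ
    have := h.lead_le τ hτ
    grind
  · intro σ h1 h2
    have := h.trail_le σ h1 h2
    grind
  · intro σ τ h1 h2 h3
    have := h.inner σ τ h1 h2 h3
    have := h.lead_le τ h3
    have := h.trail_le σ h1 (by omega)
    grind
  · intro σ τ h1 h2
    have := h.double σ τ h1 h2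
    obtain hτ | hτ := le_or_gt τ u
    · have := hdouble τ hτ
      rcases h2.eq_or_lt with rfl | hσ
      · grind
      · grind
    · grind

theorem peel_row_two (h : Core u m t) (ha : t 0 0 = 0) (hb : t 1 0 = 0)
    (hc : 0 < t 2 (u + 1)) (hlead : lead u t 0 = m) : ∃ t', Peel u m 1 t t' := by
  have htrail : mid u t + t 2 (u + 1) ≤ trail u t 1 := by
    have : trail u t 1 + t 1 0 = trail u t 0 + t 0 1 := trail_succ (Nat.zero_le _)
    have := trail_zero (u := u) (t := t)
    omega
  have hlt : ∀ τ, 1 ≤ τ → τ ≤ u + 1 → lead u t τ < m := by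
    intro τ h1 h2
    have := h.trail_le 1 le_rfl (by omega)
    have := lead_last (u := u) (t := t)
    obtain rfl | h2 : τ = u + 1 ∨ τ ≤ u := by omega
    · omega
    · have := h.inner 1 τ le_rfl h1 h2
      omega
  have hc0 : 0 < t 2 0 := by
    have : lead u t 1 + t 2 0 = lead u t 0 + t 1 1 := lead_succ (Nat.zero_le _)
    have := hlt 1 le_rfl (by omega)
    omega
  refine ⟨cell 2 0 1 + cell 2 (u + 1) 1, .of_le ?_ ?_ ?_ ?_ ?_⟩
  · exact add_cell_le (cell_le hc0) (by grind)
  · intro τ hτ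
    have := h.lead_le τ hτ
    have := hlt τ
    grind
  · intro σ h1 h2
    have := h.trail_le σ h1 h2
    grind
  · intro σ τ h1 h2 h3
    have := h.inner σ τ h1 h2 h3
    grind
  · intro σ τ h1 h2
    have := h.double σ τ h1 h2
    have := h.double σ 0 (by omega) h2
    have := hlt τ
    grind

theorem peel_row_zero (h : Core u m t) (ha : 0 < t 0 0) (ha' : 0 < t 0 (u + 1))
    (hc : t 2 (u + 1) = 0) (hlt : ∀ σ ≤ u, trail u t σ < m) (htrail : trail u t (u + 1) = m) :
    ∃ t', Peel u m 1 t t' := by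
  refine ⟨cell 0 0 1 + cell 0 (u + 1) 1, .of_le ?_ ?_ ?_ ?_ ?_⟩
  · exact add_cell_le (cell_le ha) (by grind)
  · intro τ hτ
    have := h.lead_le τ hτ
    grind
  · intro σ h1 h2
    obtain rfl | hσ : σ = u + 1 ∨ σ ≤ u := by omega
    · grind
    · have := hlt σ hσ
      grind
  · intro σ τ h1 h2 h3
    have := h.inner σ τ h1 h2 h3
    grind
  · intro σ τ h1 h2
    have := h.double σ τ h1 h2
    have := hlt σ
    have := fun hσ : σ ≤ u => h.double (u + 1) τ (by omega) (by omega)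
    grind

theorem peel_two (h : Core u m t) {s r : ℕ} (ha : 0 < t 0 0) (has : 0 < t 0 s)
    (hx : 0 < t 0 (u + 2)) (hb : 0 < t 1 (u + 1)) (hcr : 0 < t 2 r) (hc : t 2 (u + 1) = 0)
    (hy : t 1 (u + 2) = 0) (hrs : r < s) (hs : s ≤ u) (hmid : t 0 0 + mid u t ≤ m)
    (hlast : trail u t (u + 2) ≤ m) (hlead : ∀ τ, r < τ → τ ≤ u → lead u t τ ≤ mid u t)
    (hlt : ∀ σ < s, trail u t σ < m) :
    ∃ t', Peel u m 2 t t' := by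
  set t' := cell 0 0 1 + cell 0 s 1 + cell 0 (u + 2) 1 + cell 1 (u + 1) 1 + cell 2 r 1 with ht'
  have hlead' : ∀ τ ≤ u + 1, lead u t' τ = if τ ≤ r ∨ τ = u + 1 then 2 else 1 := by
    intro τ hτ
    grind
  have htrail' : ∀ σ ≤ u + 2, trail u t' σ = if s ≤ σ then 2 else 1 := by
    intro σ _
    grind
  have hmid' : mid u t' = 1 := by grind
  have ha' : t' 0 0 = 1 := by grind
  have hc' : t' 2 (u + 1) = 0 := by grind
  have hy' : t' 1 (u + 2) = 0 := by grind
  refine ⟨t', .of_le ?_ ?_ ?_ ?_ ?_⟩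
  · refine add_cell_le (add_cell_le (add_cell_le (add_cell_le (cell_le ha) ?_) ?_) ?_) ?_ <;> grind
  · intro τ hτ
    have := h.lead_le τ hτ
    have := hlead τ
    rw [hlead' τ (by omega)]
    split_ifs <;> omega
  · intro σ h1 h2
    have := h.trail_le σ h1 h2
    have := hlt σ
    rw [htrail' σ (by omega)]
    split_ifs <;> omega
  · intro σ τ h1 h2 h3
    have := h.inner σ τ h1 h2 h3
    have := hlead τ
    have := hlt σ
    rw [hlead' τ (by omega), htrail' σ (by omega), hmid', ha', hc']
    split_ifs <;> omega
  · intro σ τ h1 h2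
    have := h.double σ τ h1 h2
    have := h.lead_le τ
    have := hlead τ
    have := hlt σ
    have := h.trail_le_of_last_le hlast (by omega) h2
    rw [hlead' τ (by omega), htrail' σ (by omega), hy']
    split_ifs <;> omega

theorem peel_of_lt_trail_last (h : Core u m t) (hc : t 2 (u + 1) = 0)
    (hlast : m < trail u t (u + 2)) : ∃ t', Peel u m 1 t t' := by
  have htrail_zero := trail_zero (u := u) (t := t)
  have hlead_last := lead_last (u := u) (t := t)
  have hlead : ∀ τ ≤ u + 1, lead u t τ + t 1 (u + 2) < m := by
    intro τ hτ
    have := h.double (u + 2) τ (by omega) le_rfl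
    omega
  have hmid := hlead (u + 1) le_rfl
  obtain ⟨p, hp0, hp, hmidp, hlt⟩ := exists_first (P := fun σ => mid u t < trail u t σ)
    (Nat.zero_le (u + 2)) (by omega) (by omega)
  obtain ⟨k, rfl⟩ : ∃ k, p = k + 1 := ⟨p - 1, by omega⟩
  have hk := hlt k (by omega) (by omega)
  have := trail_succ (u := u) (t := t) (σ := k) (by omega)
  have : trail u t (u + 2) + t 1 (u + 1) = trail u t (u + 1) + t 0 (u + 2) := trail_succ le_rfl
  have := h.trail_le (u + 1) (by omega) le_rfl
  have hx : k + 1 = u + 2 → 2 ≤ t 0 (u + 2) := by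
    rintro ⟨⟩
    omega
  refine ⟨cell 0 (k + 1) 1 + cell 0 (u + 2) 1, .of_le ?_ ?_ ?_ ?_ ?_⟩
  · refine add_cell_le (cell_le (by omega)) ?_
    grind
  · intro τ hτ
    have := hlead τ (by omega)
    grind
  · intro σ h1 h2
    have := h.trail_le σ h1 h2
    have := hlt σ (by omega)
    grind
  · intro σ τ h1 h2 h3
    have := h.inner σ τ h1 h2 h3
    have := hlead τ (by omega)
    have := hlt σ (by omega)
    grind
  · intro σ τ h1 h2
    have := h.double σ τ h1 h2
    have := hlead τ (by omega)
    have := hlt σ (by omega)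
    have := h.trail_le σ (by omega)
    grind

theorem peel_of_mid_lt_trail (h : Core u m t) (hc : t 2 (u + 1) = 0) (hy : 0 < t 1 (u + 2))
    (hlead : ∀ τ ≤ u + 1, lead u t τ < m) {s : ℕ} (hs : s ≤ u + 2)
    (hmids : mid u t < trail u t s) : ∃ t', Peel u m 1 t t' := by
  have htrail_zero := trail_zero (u := u) (t := t)
  have hlead_last := lead_last (u := u) (t := t)
  have hmid := hlead (u + 1) le_rfl
  obtain ⟨p, hp0, hp, hmidp, hlt⟩ := exists_first (P := fun σ => mid u t < trail u t σ)
    (Nat.zero_le s) (by omega) hmids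
  have ha : 0 < t 0 p := by
    obtain ⟨k, rfl⟩ : ∃ k, p = k + 1 := ⟨p - 1, by omega⟩
    have := hlt k (by omega) (by omega)
    have := trail_succ (u := u) (t := t) (σ := k) (by omega)
    omega
  refine ⟨cell 0 p 1 + cell 1 (u + 2) 1, .of_le ?_ ?_ ?_ ?_ ?_⟩
  · refine add_cell_le (cell_le ha) ?_
    grind
  · intro τ hτ
    have := hlead τ (by omega)
    grind
  · intro σ h1 h2
    have := h.trail_le σ h1 h2
    have := hlt σ (by omega)
    grind
  · intro σ τ h1 h2 h3
    have := h.inner σ τ h1 h2 h3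
    have := hlead τ (by omega)
    have := hlt σ (by omega)
    grind
  · intro σ τ h1 h2
    have := h.double σ τ h1 h2
    have := hlt σ (by omega)
    have := fun h3 => h.double s τ h3 hs
    grind

theorem peel_of_mid_lt_lead (h : Core u m t) (ha : t 0 0 = 0) (hy : 0 < t 1 (u + 2))
    (hmid : mid u t < m) (htrail : ∀ σ, 1 ≤ σ → σ ≤ u + 1 → trail u t σ < m) {s : ℕ}
    (hs : s ≤ u) (hmids : mid u t < lead u t s) : ∃ t', Peel u m 1 t t' := by
  have hlead_last := lead_last (u := u) (t := t)
  obtain ⟨r, -, hr, hmidr, hlt⟩ := exists_last (P := fun τ => mid u t < lead u t τ)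
    (show s ≤ u + 1 by omega) hmids (by omega)
  have hcr : 0 < t 2 r := by
    have := hlt (r + 1) (by omega) (by omega)
    have := lead_succ (u := u) (t := t) (τ := r) (by omega)
    omega
  refine ⟨cell 2 r 1 + cell 1 (u + 2) 1, .of_le ?_ ?_ ?_ ?_ ?_⟩
  · exact add_cell_le (cell_le hcr) (by grind)
  · intro τ hτ
    have := h.lead_le τ hτ
    have := hlt τ
    grind
  · intro σ h1 h2
    have := htrail σ h1 h2
    grind
  · intro σ τ h1 h2 h3
    have := h.inner σ τ h1 h2 h3
    have := hlt τ
    have := htrail σ h1 (by omega)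
    grind
  · intro σ τ h1 h2
    have := h.double σ τ h1 h2
    have := hlt τ
    have := h.double σ r
    grind

theorem peel_of_mid_eq (h : Core u m t) (ha : t 0 0 = 0) (hc : t 2 (u + 1) = 0)
    (hy : 0 < t 1 (u + 2)) (hmid : mid u t = m) : ∃ t', Peel u m 1 t t' := by
  have htrail_zero := trail_zero (u := u) (t := t)
  have hlead_last := lead_last (u := u) (t := t)
  have := h.double (u + 2) (u + 1) (by omega) le_rfl
  obtain ⟨s, -, hs, hms, hlt⟩ := exists_last (P := fun σ => m ≤ trail u t σ)
    (Nat.zero_le (u + 2)) (by omega) (by omega)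
  have hbs : 0 < t 1 s := by
    have := hlt (s + 1) (by omega) (by omega)
    have := trail_succ (u := u) (t := t) (σ := s) (by omega)
    omega
  have hdouble := fun τ hτ => h.double s τ hτ (by omega)
  refine ⟨cell 1 s 1 + cell 1 (u + 2) 1, .of_le ?_ ?_ ?_ ?_ ?_⟩
  · refine add_cell_le (cell_le hbs) ?_
    grind
  · intro τ hτ
    have := h.lead_le τ hτ
    have := hdouble τ
    grind
  · intro σ h1 h2
    have := h.trail_le σ h1 h2
    have := hlt σ
    grind
  · intro σ τ h1 h2 h3
    have := h.inner σ τ h1 h2 h3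
    have := h.lead_le τ h3
    have := h.trail_le σ h1 (by omega)
    have := hlt σ
    have := hdouble τ
    grind
  · intro σ τ h1 h2
    have := h.double σ τ h1 h2
    have := hlt σ
    have := hdouble τ
    grind

theorem lead_lt_of_row_zero_first (h : Core u m t) (ha : t 0 0 = 0) (hmid : mid u t < m)
    {p r : ℕ} (hp0 : 0 < p) (hmidp : p ≤ u → mid u t < trail u t p) (hb : ∀ j < p, t 1 j = 0)
    (hcr : ∀ j < r, t 2 j = 0) (hcr' : r ≤ u → 0 < t 2 r) {τ : ℕ} (hτ : τ ≤ u + 1)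
    (hτr : τ ≤ r → r ≤ u → p ≤ r) : lead u t τ < m := by
  have hlead_last := lead_last (u := u) (t := t)
  have hlead_p : ∀ τ, p ≤ τ → τ ≤ u → lead u t τ < m := by
    intro τ h1 h2
    have := h.inner p τ hp0 h1 h2
    have := hmidp (h1.trans h2)
    omega
  obtain rfl | hτu : τ = u + 1 ∨ τ ≤ u := by omega
  · omega
  obtain hpτ | hτp := le_or_gt p τ
  · exact hlead_p τ hpτ hτu
  obtain hrτ | hτr' := lt_or_ge r τ
  · have := lead_lt_lead_of_pos (t := t) hrτ hτ (fun j _ _ => hb j (by omega)) (hcr' (by omega))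
    have := h.lead_le r (by omega)
    omega
  obtain hpu | hup := le_or_gt p u
  · have := lead_mono_of_eq_zero (u := u) (t := t) hτp.le (by omega)
      fun j _ _ => hcr j (by omega)
    have := hlead_p p le_rfl hpu
    omega
  · have := lead_mono_of_eq_zero (t := t) hτ le_rfl fun j _ _ => hcr j (by omega)
    omega

theorem lead_lt_of_row_one_first (h : Core u m t) (ha : t 0 0 = 0) (hmid : mid u t ≤ m)
    {q r τ : ℕ} (hq : q ≤ u + 1) (hb : ∀ j < q, t 1 j = 0) (hbq : 0 < t 1 q)
    (hcr : ∀ j < r, t 2 j = 0) (hcr' : r < q → 0 < t 2 r) (hτ : τ < q) (hτr : τ ≤ r → q ≤ r) :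
    lead u t τ < m := by
  obtain hrτ | hτr' := lt_or_ge r τ
  · have := lead_lt_lead_of_pos (u := u) (t := t) hrτ (by omega) (fun j _ _ => hb j (by omega))
      (hcr' (by omega))
    have := h.lead_le r (by omega)
    omega
  · obtain ⟨k, rfl⟩ : ∃ k, q = k + 1 := ⟨q - 1, by omega⟩
    have := lead_mono_of_eq_zero (u := u) (t := t) (show τ ≤ k by omega) (by omega)
      fun j _ _ => hcr j (by omega)
    have := lead_succ (u := u) (t := t) (τ := k) (by omega)
    have := hcr k (by omega)
    obtain rfl | hku : k = u ∨ k + 1 ≤ u := by omega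
    · have := lead_last (u := k) (t := t)
      omega
    · have := h.lead_le (k + 1) hku
      omega

theorem mid_lt_trail_of_first (hc : t 2 (u + 1) = 0) {p : ℕ} (hp0 : 0 < p) (hp : p ≤ u + 2)
    (hap : 0 < t 0 p) (hb : ∀ j < p, t 1 j = 0) : mid u t < trail u t p := by
  obtain ⟨k, rfl⟩ : ∃ k, p = k + 1 := ⟨p - 1, by omega⟩
  have := trail_zero (u := u) (t := t)
  have := trail_mono_of_eq_zero (u := u) (t := t) (Nat.zero_le k) (by omega)
    fun j _ _ => hb j (by omega)
  have := trail_succ (u := u) (t := t) (σ := k) (by omega)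
  have := hb k (by omega)
  omega

theorem trail_le_mid_of_first (hc : t 2 (u + 1) = 0) {p σ : ℕ} (hap : ∀ j < p, t 0 j = 0)
    (hσ : σ < p) (hσu : σ ≤ u + 2) : trail u t σ ≤ mid u t := by
  have := trail_anti_of_eq_zero (u := u) (t := t) (Nat.zero_le σ) hσu fun j _ _ => hap j (by omega)
  have := trail_zero (u := u) (t := t)
  omega

theorem trail_lt_mid_of_first (hc : t 2 (u + 1) = 0) {p q σ : ℕ} (hap : ∀ j < p, t 0 j = 0)
    (hq : q ≤ u + 1) (hbq : 0 < t 1 q) (hqσ : q + 1 ≤ σ) (hσ : σ < p) (hσu : σ ≤ u + 2) :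
    trail u t σ < mid u t := by
  have := trail_anti_of_eq_zero (u := u) (t := t) hqσ hσu fun j _ _ => hap j (by omega)
  have : trail u t (q + 1) + t 1 q = trail u t q + t 0 (q + 1) := trail_succ hq
  have := hap (q + 1) (by omega)
  have := trail_le_mid_of_first (u := u) hc hap (show q < p by omega) (by omega)
  omega

theorem peel_row_zero_first (h : Core u m t) (ha : t 0 0 = 0) (hc : t 2 (u + 1) = 0)
    (hy : t 1 (u + 2) = 0) (hm : 0 < m) (hlast : trail u t (u + 2) ≤ m) {p r : ℕ}
    (hp : p ≤ u + 3) (hap : ∀ j < p, t 0 j = 0) (hap' : p < u + 3 → 0 < t 0 p)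
    (hb : ∀ j < p, t 1 j = 0) (hr : r ≤ u + 1) (hcr : ∀ j < r, t 2 j = 0)
    (hcr' : r < u + 1 → 0 < t 2 r) : ∃ t', Peel u m 1 t t' := by
  have hp0 : 0 < p := Nat.pos_of_ne_zero fun h0 => by subst h0; omega
  have hmid : mid u t < m := by
    obtain rfl | hpu : p = u + 3 ∨ p ≤ u + 2 := by omega
    · rwa [mid, Finset.sum_eq_zero fun j hj => hb j (by simp at hj; omega)]
    · exact (mid_lt_trail_of_first hc hp0 hpu (hap' (by omega)) hb).trans_le
        (h.trail_le_of_last_le hlast hp0 hpu)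
  have hlead : ∀ τ ≤ u + 1, (τ ≤ r → r ≤ u → p ≤ r) → lead u t τ < m := fun τ =>
    h.lead_lt_of_row_zero_first ha hmid hp0
      (fun hpu => mid_lt_trail_of_first hc hp0 (by omega) (hap' (by omega)) hb) hb hcr
      (fun hru => hcr' (by omega))
  have hlt := fun σ => trail_le_mid_of_first (u := u) (t := t) (p := p) (σ := σ) hc hap
  obtain ⟨e, he, he'⟩ : ∃ e ≤ t 0 p, (p ≤ u + 2 → e = 1) :=
    ⟨min (t 0 p) 1, by omega⟩
  obtain ⟨f, hf, hf'⟩ : ∃ f ≤ t 2 r, (f = 1 ∧ r < p ∧ r ≤ u ∨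
      f = 0 ∧ (r ≤ u → p ≤ r)) := by
    by_cases hrp : r < p ∧ r ≤ u
    · exact ⟨1, hcr' (by omega), by omega⟩
    · exact ⟨0, by omega⟩
  refine ⟨cell 0 p e + cell 2 r f, .of_le ?_ ?_ ?_ ?_ ?_⟩
  · exact add_cell_le (cell_le he) (by grind)
  · intro τ hτ
    have := h.lead_le τ hτ
    have := hlead τ (by omega)
    grind
  · intro σ h1 h2
    have := h.trail_le σ h1 h2
    have := hlt σ
    grind
  · intro σ τ h1 h2 h3
    have := h.inner σ τ h1 h2 h3
    have := hlead τ (by omega)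
    have := hlt σ
    grind
  · intro σ τ h1 h2
    have := h.double σ τ h1 h2
    have := h.trail_le_of_last_le hlast (by omega) h2
    have := hlead τ (by omega)
    have := h.lead_le τ
    have := hlt σ
    grind

theorem peel_row_one_first (h : Core u m t) (ha : t 0 0 = 0) (hc : t 2 (u + 1) = 0)
    (hy : t 1 (u + 2) = 0) (hmid : mid u t ≤ m) (hlast : trail u t (u + 2) ≤ m) {p q r : ℕ}
    (hqp : q < p) (hap : ∀ j < p, t 0 j = 0) (hap' : p < u + 3 → 0 < t 0 p)
    (hq : q ≤ u + 1) (hb : ∀ j < q, t 1 j = 0) (hbq : 0 < t 1 q)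
    (hcr : ∀ j < r, t 2 j = 0) (hcr' : r < u + 1 → 0 < t 2 r) : ∃ t', Peel u m 1 t t' := by
  have hlead : ∀ τ < q, (τ ≤ r → q ≤ r) → lead u t τ < m := fun τ =>
    h.lead_lt_of_row_one_first ha hmid hq hb hbq hcr (fun hrq => hcr' (by omega))
  have hlead_le : ∀ τ ≤ u + 1, lead u t τ ≤ m := by
    intro τ hτ
    obtain rfl | hτ : τ = u + 1 ∨ τ ≤ u := by omega
    · rwa [lead_last, ha, zero_add]
    · exact h.lead_le τ hτ
  have htrail_lt := fun σ hσ => trail_lt_mid_of_first (u := u) (σ := σ) hc hap hq hbq hσ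
  have hlt := fun σ => trail_le_mid_of_first (u := u) (t := t) (p := p) (σ := σ) hc hap
  obtain ⟨e, he, he1, he'⟩ : ∃ e ≤ t 0 p, e ≤ 1 ∧ (p ≤ u + 2 → e = 1) :=
    ⟨min (t 0 p) 1, by omega⟩
  obtain ⟨f, hf, hf'⟩ : ∃ f ≤ t 2 r, (f = 1 ∧ r < q ∨ f = 0 ∧ q ≤ r) := by
    by_cases hrq : r < q
    · exact ⟨1, hcr' (by omega), by omega⟩
    · exact ⟨0, by omega⟩
  refine ⟨cell 0 p e + cell 1 q 1 + cell 2 r f, .of_le ?_ ?_ ?_ ?_ ?_⟩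
  · exact add_cell_le (add_cell_le (cell_le he) (by grind)) (by grind)
  · intro τ hτ
    have := h.lead_le τ hτ
    have := hlead τ
    grind
  · intro σ h1 h2
    have := h.trail_le σ h1 h2
    have := hlt σ
    have := htrail_lt σ
    grind
  · intro σ τ h1 h2 h3
    have := h.inner σ τ h1 h2 h3
    have := h.lead_le τ (by omega)
    have := hlead τ
    have := hlt σ
    have := htrail_lt σ
    grind
  · intro σ τ h1 h2
    have := h.double σ τ h1 h2
    have := h.trail_le_of_last_le hlast (by omega) h2
    have := hlead τ
    have := hlead_le τ (by omega)
    have := htrail_lt σ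
    clear hlead hlead_le htrail_lt hlt
    grind

theorem peel_antichain (h : Core u m t) (ha : t 0 0 = 0) (hc : t 2 (u + 1) = 0)
    (hy : t 1 (u + 2) = 0) (hm : 0 < m) (hmid : mid u t ≤ m) (hlast : trail u t (u + 2) ≤ m) :
    ∃ t', Peel u m 1 t t' := by
  obtain ⟨p, hp, hap, hap'⟩ := exists_first_pos (t 0) (u + 3)
  obtain ⟨q, hq, hbq, hbq'⟩ := exists_first_pos (t 1) (u + 2)
  obtain ⟨r, hr, hcr, hcr'⟩ := exists_first_pos (t 2) (u + 1)
  by_cases hqp : q < p ∧ q < u + 2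
  · exact h.peel_row_one_first ha hc hy hmid hlast hqp.1 hap hap' (by omega) hbq (hbq' hqp.2)
      hcr hcr'
  · refine h.peel_row_zero_first ha hc hy hm hlast hp hap hap' (fun j hj => ?_) hr hcr hcr'
    obtain rfl | hjq : j = u + 2 ∨ j < q := by omega
    · exact hy
    · exact hbq j hjq

theorem exists_peel_of_row_two_pos (h : Core u m t) (hc : 0 < t 2 (u + 1)) :
    ∃ t', Peel u m 1 t t' := by
  have hslack (hlead : ∀ τ ≤ u, lead u t τ < m + t 0 0) : ∃ t', Peel u m 1 t t' := by
    refine h.peel_slack hlead (fun σ h1 h2 => ?_) fun σ τ h1 h2 h3 => ?_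
    · have := h.trail_le σ h1 h2
      omega
    · have := h.inner σ τ h1 h2 h3
      have := hlead τ h3
      omega
  by_cases ha : t 0 0 = 0
  swap
  · refine hslack fun τ hτ => ?_
    have := h.lead_le τ hτ
    omega
  by_cases hlead : ∀ τ ≤ u, lead u t τ < m
  · exact hslack (by simpa [ha])
  by_cases hb : t 1 0 = 0
  · refine h.peel_row_two ha hb hc ?_
    push Not at hlead
    obtain ⟨τ, hτ, hmτ⟩ := hlead
    have := h.lead_le τ hτ
    have := h.inner 1 τ le_rfl
    have : trail u t 1 + t 1 0 = trail u t 0 + t 0 1 := trail_succ (Nat.zero_le _)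
    have := trail_zero (u := u) (t := t)
    obtain rfl : τ = 0 := by omega
    omega
  · refine h.peel_ends (.inr (Nat.pos_of_ne_zero hb)) (.inl hc) (by omega) fun τ hτ => ?_
    have := h.double (u + 2) τ (by omega) le_rfl
    omega

theorem exists_peel_two_of_tight (h : Core u m t) (ha : 0 < t 0 0) (hb : 0 < t 1 (u + 1))
    (hc : t 2 (u + 1) = 0) (hy : t 1 (u + 2) = 0) (hlast : trail u t (u + 2) = m) {s τ : ℕ}
    (hs : s ≤ u) (htrail : trail u t s = m) (hlt : ∀ σ < s, trail u t σ < m) (hτs : τ < s)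
    (hlead : lead u t τ = m) : ∃ t', Peel u m 2 t t' := by
  have hmid : t 0 0 + mid u t ≤ m := by
    have := h.double (u + 2) (u + 1) (by omega) le_rfl
    have := lead_last (u := u) (t := t)
    omega
  have hlead_le_mid : ∀ τ, s ≤ τ → τ ≤ u → lead u t τ ≤ mid u t := by
    intro τ h1 h2
    have := h.inner s τ (by omega) h1 h2
    omega
  obtain ⟨r, -, hrs, hmidr, hltr⟩ := exists_last (P := fun τ => mid u t < lead u t τ) hτs.le
    (by omega) (hlead_le_mid s le_rfl hs).not_gt
  refine h.peel_two (s := s) (r := r) ha ?_ ?_ hb ?_ hc hy hrs hs hmid hlast.le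
    (fun τ h1 h2 => ?_) hlt
  · obtain ⟨k, rfl⟩ : ∃ k, s = k + 1 := ⟨s - 1, by omega⟩
    have := trail_succ (t := t) (show k ≤ u + 1 by omega)
    have := hlt k (by omega)
    omega
  · have : trail u t (u + 2) + t 1 (u + 1) = trail u t (u + 1) + t 0 (u + 2) :=
      trail_succ le_rfl
    have := h.trail_le (u + 1) (by omega) le_rfl
    omega
  · have := hltr (r + 1) (by omega) (by omega)
    have := lead_succ (u := u) (t := t) (τ := r) (by omega)
    omega
  · obtain hτ | hτ := le_or_gt s τ
    · exact hlead_le_mid τ hτ h2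
    · exact not_lt.1 (hltr τ h1 hτ.le)

theorem exists_peel_of_tight_double (h : Core u m t) (ha : 0 < t 0 0) (hb : 0 < t 1 (u + 1))
    (hc : t 2 (u + 1) = 0) {s τ : ℕ} (hs0 : 0 < s) (hs : s ≤ u) (htrail : trail u t s = m)
    (hlt : ∀ σ < s, trail u t σ < m) (hτ : τ ≤ u)
    (hdouble : 2 * m ≤ lead u t τ + trail u t (u + 2) + t 1 (u + 2))
    (hlast : trail u t (u + 2) ≤ m) : (∃ t', Peel u m 1 t t') ∨ ∃ t', Peel u m 2 t t' := by
  have hdouble_mid := h.double (u + 2) (u + 1) (by omega) le_rfl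
  rw [lead_last] at hdouble_mid
  have hτs : τ < s := by
    by_contra! hsτ
    have := h.inner s τ hs0 hsτ hτ
    omega
  have hlast_eq : trail u t (u + 2) = m := by
    have := h.double s τ hτs (by omega)
    omega
  obtain hy | hy := Nat.eq_zero_or_pos (t 1 (u + 2))
  · have := h.lead_le τ hτ
    exact .inr (h.exists_peel_two_of_tight ha hb hc hy hlast_eq hs htrail hlt hτs (by omega))
  · refine .inl (h.peel_of_mid_lt_trail hc hy (fun τ hτ => ?_) le_rfl (by omega))
    have := h.double (u + 2) τ (by omega) le_rfl
    omega

theorem exists_peel_of_tight_trail (h : Core u m t) (ha : 0 < t 0 0) (hc : t 2 (u + 1) = 0)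
    (hlast : trail u t (u + 2) ≤ m) {s : ℕ} (hs0 : 0 < s) (hs : s ≤ u + 1)
    (htrail : trail u t s = m) (hlt : ∀ σ < s, trail u t σ < m)
    (hends : t 1 (u + 1) = 0 ∨
      ∃ τ ≤ u, 2 * m ≤ lead u t τ + trail u t (u + 2) + t 1 (u + 2)) :
    (∃ t', Peel u m 1 t t') ∨ ∃ t', Peel u m 2 t t' := by
  obtain rfl | hsu : s = u + 1 ∨ s ≤ u := by omega
  · refine .inl (h.peel_row_zero ha ?_ hc (fun σ hσ => hlt σ (by omega)) htrail)
    have := trail_succ (t := t) (show u ≤ u + 1 by omega)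
    have := hlt u (by omega)
    omega
  obtain hb | hb := Nat.eq_zero_or_pos (t 1 (u + 1))
  · have := lead_last (u := u) (t := t)
    have := lead_succ (t := t) (le_refl u)
    have := h.inner s u hs0 hsu le_rfl
    omega
  · obtain ⟨τ, hτ, hdouble⟩ := hends.resolve_left hb.ne'
    exact h.exists_peel_of_tight_double ha hb hc hs0 hsu htrail hlt hτ hdouble hlast

theorem exists_peel_of_row_zero_pos (h : Core u m t) (ha : 0 < t 0 0) (hc : t 2 (u + 1) = 0)
    (hlast : trail u t (u + 2) ≤ m) :
    (∃ t', Peel u m 1 t t') ∨ ∃ t', Peel u m 2 t t' := by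
  by_cases hall : ∀ σ, 1 ≤ σ → σ ≤ u + 1 → trail u t σ < m
  · refine .inl (h.peel_slack (fun τ hτ => ?_) (by simpa [hc]) fun σ τ h1 h2 h3 => ?_)
    · have := h.lead_le τ hτ
      omega
    · have := h.inner σ τ h1 h2 h3
      omega
  by_cases hends : 0 < t 1 (u + 1) ∧
      ∀ τ ≤ u, lead u t τ + trail u t (u + 2) + t 1 (u + 2) < 2 * m + t 2 (u + 1)
  · exact .inl (h.peel_ends (.inl ha) (.inr hends.1) (by omega) hends.2)
  push Not at hall
  obtain ⟨s', -, hs', hms'⟩ := hall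
  have hends' : t 1 (u + 1) = 0 ∨
      ∃ τ ≤ u, 2 * m ≤ lead u t τ + trail u t (u + 2) + t 1 (u + 2) := by
    by_contra! hcon
    exact hends ⟨Nat.pos_of_ne_zero hcon.1, by simpa [hc] using hcon.2⟩
  have hmid : t 0 0 + mid u t ≤ m := by
    rw [← lead_last]
    obtain hb | ⟨τ, hτ, hdouble⟩ := hends'
    · have := lead_succ (t := t) (le_refl u)
      have := h.lead_le u le_rfl
      omega
    · have := h.double (u + 2) (u + 1) (by omega) le_rfl
      have := h.lead_le τ hτ
      omega
  obtain ⟨s, hs0, hs, hms, hlt⟩ := exists_first (P := fun σ => m ≤ trail u t σ) (Nat.zero_le s')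
    (by have := trail_zero (u := u) (t := t); omega) hms'
  exact h.exists_peel_of_tight_trail ha hc hlast hs0 (by omega)
    ((h.trail_le s hs0 (by omega)).antisymm hms) (fun σ hσ => not_le.1 (hlt σ σ.zero_le hσ)) hends'

theorem exists_peel_of_mid_lt (h : Core u m t) (ha : t 0 0 = 0) (hc : t 2 (u + 1) = 0)
    (hy : 0 < t 1 (u + 2)) (hmid : mid u t < m) : ∃ t', Peel u m 1 t t' := by
  have hlead_last := lead_last (u := u) (t := t)
  by_cases hlead : ∃ τ ≤ u, mid u t < lead u t τ
  · obtain ⟨τ, hτ, hmidτ⟩ := hlead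
    by_cases htrail : ∀ σ, 1 ≤ σ → σ ≤ u + 1 → trail u t σ < m
    · exact h.peel_of_mid_lt_lead ha hy hmid htrail hτ hmidτ
    push Not at htrail
    obtain ⟨s, hs0, hs, hms⟩ := htrail
    refine h.peel_of_mid_lt_trail hc hy (fun τ hτ => ?_) (by omega) (hmid.trans_le hms)
    have := h.double s τ
    have := h.inner s τ hs0
    obtain rfl | hτu : τ = u + 1 ∨ τ ≤ u := by omega
    · omega
    · omega
  push Not at hlead
  by_cases htrail : ∃ σ, 1 ≤ σ ∧ σ ≤ u + 1 ∧ mid u t < trail u t σ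
  · obtain ⟨σ, -, hσ, hmidσ⟩ := htrail
    refine h.peel_of_mid_lt_trail hc hy (fun τ hτ => ?_) (by omega) hmidσ
    have := hlead τ
    obtain rfl | hτu : τ = u + 1 ∨ τ ≤ u := by omega
    · omega
    · omega
  push Not at htrail
  refine h.peel_slack (fun τ hτ => ?_) (fun σ h1 h2 => ?_) fun σ τ h1 h2 h3 => ?_
  · have := hlead τ hτ
    omega
  · have := htrail σ h1 h2
    omega
  · have := hlead τ h3
    have := htrail σ h1 (by omega)
    omega

theorem exists_peel_of_ends_eq_zero (h : Core u m t) (hm : 0 < m) (ha : t 0 0 = 0)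
    (hc : t 2 (u + 1) = 0) (hlast : trail u t (u + 2) ≤ m) : ∃ t', Peel u m 1 t t' := by
  obtain hmid | hmid := lt_or_ge m (mid u t)
  · refine h.peel_ends (.inr ?_) (.inr ?_) (fun _ _ => hmid) fun τ hτ => ?_
    · have := h.trail_le 1 le_rfl (by omega)
      have : trail u t 1 + t 1 0 = trail u t 0 + t 0 1 := trail_succ (Nat.zero_le _)
      have := trail_zero (u := u) (t := t)
      omega
    · have := lead_last (u := u) (t := t)
      have := h.lead_le u le_rfl
      have := lead_succ (t := t) (le_refl u)
      omega
    · have := lead_last (u := u) (t := t)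
      have := h.double (u + 2) (u + 1) (by omega) le_rfl
      have := h.lead_le τ hτ
      omega
  obtain hy | hy := Nat.eq_zero_or_pos (t 1 (u + 2))
  · exact h.peel_antichain ha hc hy hm hmid hlast
  obtain hmid | hmid := hmid.eq_or_lt
  · exact h.peel_of_mid_eq ha hc hy hmid
  · exact h.exists_peel_of_mid_lt ha hc hy hmid

theorem exists_peel (h : Core u m t) (hm : 0 < m) :
    (∃ t', Peel u m 1 t t') ∨ 0 < t 0 0 ∧ ∃ t', Peel u m 2 t t' := by
  obtain hc | hc := Nat.eq_zero_or_pos (t 2 (u + 1))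
  · obtain hlast | hlast := lt_or_ge m (trail u t (u + 2))
    · exact .inl (h.peel_of_lt_trail_last hc hlast)
    obtain ha | ha := Nat.eq_zero_or_pos (t 0 0)
    · exact .inl (h.exists_peel_of_ends_eq_zero hm ha hc hlast)
    · exact (h.exists_peel_of_row_zero_pos ha hc hlast).imp_right (⟨ha, ·⟩)
  · exact .inl (h.exists_peel_of_row_two_pos hc)

end Core

/-- The Dyck path inequalities of level `m` for the last three rows of `R_i^+`: those of `Core` and
the one for the double path through all entries of the rows `0` and `1`. -/
structure Strip (u m : ℕ) (t : Rows) : Prop extends Core u m t where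
  outer : ∑ j ∈ Finset.range (u + 4), t 0 j + ∑ j ∈ Finset.range (u + 3), t 1 j ≤ 2 * m

section Strip

variable {u m : ℕ} {t t' : Rows}

theorem Core.congr (h : Core u m t) (h0 : ∀ j ≤ u + 2, t' 0 j = t 0 j) (h1 : t' 1 = t 1)
    (h2 : t' 2 = t 2) : Core u m t' := by
  have hlead : lead u t' = lead u t := by
    funext τ
    simp only [lead, h0 0 (Nat.zero_le _), h1, h2]
  have htrail : ∀ σ ≤ u + 2, trail u t' σ = trail u t σ := fun σ hσ => by
    have hsum : ∑ j ∈ Finset.Ico 1 (σ + 1), t' 0 j = ∑ j ∈ Finset.Ico 1 (σ + 1), t 0 j :=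
      Finset.sum_congr rfl fun j hj => h0 j (by rw [Finset.mem_Ico] at hj; omega)
    simp only [trail, hsum, h1, h2]
  refine ⟨fun τ hτ => ?_, fun σ hσ hσ' => ?_, fun σ τ hσ hστ hτ => ?_, fun σ τ hτσ hσ => ?_⟩
  · exact hlead ▸ h.lead_le τ hτ
  · exact (htrail σ (by omega)).trans_le (h.trail_le σ hσ hσ')
  · simpa only [hlead, htrail σ (by omega), mid, h0 0 (Nat.zero_le _), h1, h2]
      using h.inner σ τ hσ hστ hτ
  · simpa only [hlead, htrail σ hσ, h1] using h.double σ τ hτσ hσ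

/-- The array `t` with the last entry of row `0` replaced by `z`. -/
def setLast (u : ℕ) (t : Rows) (z : ℕ) : Rows :=
  Function.update t 0 (Function.update (t 0) (u + 3) z)

theorem Core.strip_setLast (h : Core u m t) {z : ℕ}
    (hz : ∑ j ∈ Finset.range (u + 3), t 0 j + z + ∑ j ∈ Finset.range (u + 3), t 1 j ≤ 2 * m) :
    Strip u m (setLast u t z) := by
  have h0 : ∀ j ≤ u + 2, setLast u t z 0 j = t 0 j := fun j hj => by
    simp [setLast, show j ≠ u + 3 by omega]
  refine ⟨h.congr h0 rfl rfl, ?_⟩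
  rw [Finset.sum_range_succ, Finset.sum_congr rfl fun j hj => h0 j (Finset.mem_range_succ_iff.1 hj)]
  simpa [setLast] using hz

theorem setLast_add_setLast {z z' : ℕ} (hz : t 0 (u + 3) + t' 0 (u + 3) = z + z') :
    setLast u t z + setLast u t' z' = t + t' := by
  rw [setLast, setLast, ← Function.update_add, ← Function.update_add, ← hz]
  exact (congrArg _ (Function.update_eq_self _ _)).trans (Function.update_eq_self _ _)

theorem Core.sum_add_sum_le (h : Core u m t) :
    ∑ j ∈ Finset.range (u + 3), t 0 j + ∑ j ∈ Finset.range (u + 3), t 1 j ≤ 2 * m := by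
  have hdouble : t 0 0 + mid u t + (∑ j ∈ Finset.Ico 1 (u + 3), t 0 j +
      ∑ j ∈ Finset.Ico (u + 2) (u + 2), t 1 j + t 2 (u + 1)) + t 1 (u + 2) ≤ 2 * m := by
    rw [← lead_last]
    exact h.double (u + 2) (u + 1) (Nat.lt_succ_self _) le_rfl
  have h0 : ∑ j ∈ Finset.range (u + 3), t 0 j = t 0 0 + ∑ j ∈ Finset.Ico 1 (u + 3), t 0 j := by
    rw [Finset.range_eq_Ico, Finset.sum_eq_sum_Ico_succ_bot (Nat.succ_pos _)]
  have h1 : ∑ j ∈ Finset.range (u + 3), t 1 j = mid u t + t 1 (u + 2) :=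
    Finset.sum_range_succ _ _
  omega

theorem Strip.exists_of_peel {d : ℕ} (h : Strip u m t) (hp : Peel u m d t t') :
    ∃ s ≤ t, Strip u d s ∧ Strip u (m - d) (t - s) := by
  obtain ⟨v, rfl⟩ := exists_add_of_le hp.le
  have hv : Core u (m - d) v := by simpa only [add_tsub_cancel_left] using hp.core_sub
  obtain ⟨z', z, hz, hd, hmd⟩ : ∃ z' z, t' 0 (u + 3) + v 0 (u + 3) = z' + z ∧
      ∑ j ∈ Finset.range (u + 3), t' 0 j + z' + ∑ j ∈ Finset.range (u + 3), t' 1 j ≤ 2 * d ∧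
      ∑ j ∈ Finset.range (u + 3), v 0 j + z + ∑ j ∈ Finset.range (u + 3), v 1 j ≤
        2 * (m - d) := by
    have hd := hp.core.sum_add_sum_le
    have hmd := hv.sum_add_sum_le
    have hm := h.outer
    have hdm := hp.level_le
    simp only [Finset.sum_range_succ _ (u + 3), Pi.add_apply, Finset.sum_add_distrib] at hm
    let z' := min (t' 0 (u + 3) + v 0 (u + 3))
      (2 * d - (∑ j ∈ Finset.range (u + 3), t' 0 j + ∑ j ∈ Finset.range (u + 3), t' 1 j))
    exact ⟨z', t' 0 (u + 3) + v 0 (u + 3) - z', by omega, by omega, by omega⟩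
  have hsplit : t' + v = setLast u t' z' + setLast u v z :=
    (setLast_add_setLast hz).symm
  rw [hsplit]
  refine ⟨setLast u t' z', le_self_add, hp.core.strip_setLast hd, ?_⟩
  rw [add_tsub_cancel_left]
  exact hv.strip_setLast hmd

theorem Strip.exists_split (h : Strip u m t) (hm : 0 < m) :
    ∃ d, (d = 1 ∨ d = 2 ∧ 0 < t 0 0) ∧ d ≤ m ∧
      ∃ t' ≤ t, Strip u d t' ∧ Strip u (m - d) (t - t') := by
  rcases h.toCore.exists_peel hm with ⟨t', hp⟩ | ⟨h0, t', hp⟩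
  · exact ⟨1, .inl rfl, hp.level_le, h.exists_of_peel hp⟩
  · exact ⟨2, .inr ⟨rfl, h0⟩, hp.level_le, h.exists_of_peel hp⟩

end Strip

section Inequalities

variable {u m : ℕ} {t : Rows}

theorem row_one_add_mid {σ τ : ℕ} (hστ : σ ≤ τ + 1) (hτ : τ ≤ u + 1) :
    ∑ j ∈ Finset.Ico σ (τ + 1), t 1 j + mid u t =
      ∑ j ∈ Finset.range (τ + 1), t 1 j + ∑ j ∈ Finset.Ico σ (u + 2), t 1 j := by
  rw [mid, ← Finset.sum_range_add_sum_Ico _ (show σ ≤ u + 2 by omega),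
    ← Finset.sum_range_add_sum_Ico _ hστ]
  ring

theorem lead_add_trail_lower {σ τ : ℕ} (hστ : σ ≤ τ) (hτ : τ ≤ u) :
    lead u t τ + trail u t σ = ∑ j ∈ Finset.Ico 0 (σ + 1), t 0 j +
      (∑ j ∈ Finset.Ico σ (τ + 1), t 1 j + ∑ j ∈ Finset.Ico τ (u + 1), t 2 j) +
      (mid u t + t 2 (u + 1)) := by
  have hrow := row_one_add_mid (t := t) (show σ ≤ τ + 1 by omega) (show τ ≤ u + 1 by omega)
  have hfirst : ∑ j ∈ Finset.Ico 0 (σ + 1), t 0 j = t 0 0 + ∑ j ∈ Finset.Ico 1 (σ + 1), t 0 j :=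
    Finset.sum_eq_sum_Ico_succ_bot (Nat.succ_pos σ) _
  rw [lead, trail]
  omega

theorem lead_add_trail_upper {σ τ : ℕ} (hστ : σ ≤ τ) (hτ : τ ≤ u + 1) :
    lead u t τ + trail u t σ = ∑ j ∈ Finset.Ico 1 (σ + 1), t 0 j +
      (∑ j ∈ Finset.Ico σ (τ + 1), t 1 j + ∑ j ∈ Finset.Ico τ (u + 2), t 2 j) +
      (mid u t + t 0 0) := by
  have hrow := row_one_add_mid (t := t) (show σ ≤ τ + 1 by omega) hτ
  rw [lead, trail, Finset.sum_Ico_succ_top hτ]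
  omega

theorem lead_add_trail_double {σ τ : ℕ} (hσ : σ ≤ u + 2) (hτ : τ ≤ u + 1) :
    lead u t τ + trail u t σ + t 1 (u + 2) = ∑ j ∈ Finset.Ico 0 (σ + 1), t 0 j +
      ∑ j ∈ Finset.Ico σ (u + 3), t 1 j + (∑ j ∈ Finset.Ico 0 (τ + 1), t 1 j +
        ∑ j ∈ Finset.Ico τ (u + 2), t 2 j) := by
  rw [lead, trail, Finset.sum_eq_sum_Ico_succ_bot (Nat.succ_pos σ), Finset.sum_Ico_succ_top hσ,
    Finset.sum_Ico_succ_top hτ, Finset.range_eq_Ico]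
  ring

theorem strip_iff : Strip u m t ↔
    (∀ σ τ, σ ≤ τ → τ ≤ u → ∑ j ∈ Finset.Ico 0 (σ + 1), t 0 j +
      (∑ j ∈ Finset.Ico σ (τ + 1), t 1 j + ∑ j ∈ Finset.Ico τ (u + 1), t 2 j) ≤ m) ∧
    (∀ σ τ, 1 ≤ σ → σ ≤ τ → τ ≤ u + 1 → ∑ j ∈ Finset.Ico 1 (σ + 1), t 0 j +
      (∑ j ∈ Finset.Ico σ (τ + 1), t 1 j + ∑ j ∈ Finset.Ico τ (u + 2), t 2 j) ≤ m) ∧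
    (∀ σ τ, τ < σ → σ ≤ u + 2 → ∑ j ∈ Finset.Ico 0 (σ + 1), t 0 j +
      ∑ j ∈ Finset.Ico σ (u + 3), t 1 j + (∑ j ∈ Finset.Ico 0 (τ + 1), t 1 j +
        ∑ j ∈ Finset.Ico τ (u + 2), t 2 j) ≤ 2 * m) ∧
    ∑ j ∈ Finset.Ico 0 (u + 4), t 0 j + ∑ j ∈ Finset.Ico 0 (u + 3), t 1 j ≤ 2 * m := by
  have htrail := trail_zero (u := u) (t := t)
  have hlead := lead_last (u := u) (t := t)
  constructor
  · intro h
    refine ⟨fun σ τ hστ hτ => ?_, fun σ τ hσ hστ hτ => ?_, fun σ τ hτσ hσ => ?_, ?_⟩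
    · have heq := lead_add_trail_lower (t := t) hστ hτ
      obtain rfl | hσ := Nat.eq_zero_or_pos σ
      · have := h.lead_le τ hτ
        omega
      · have := h.inner σ τ hσ hστ hτ
        omega
    · have heq := lead_add_trail_upper (t := t) hστ hτ
      obtain rfl | hτ := hτ.eq_or_lt
      · have := h.trail_le σ hσ hστ
        omega
      · have := h.inner σ τ hσ hστ (Nat.le_of_lt_succ hτ)
        omega
    · exact (lead_add_trail_double hσ (by omega)).symm.trans_le (h.double σ τ hτσ hσ)
    · simpa only [Finset.range_eq_Ico] using h.outer
  · rintro ⟨hlower, hupper, hdouble, houter⟩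
    refine ⟨⟨fun τ hτ => ?_, fun σ hσ hσ' => ?_, fun σ τ hσ hστ hτ => ?_, fun σ τ hτσ hσ => ?_⟩,
      by simpa only [Finset.range_eq_Ico] using houter⟩
    · have := hlower 0 τ (Nat.zero_le τ) hτ
      have := lead_add_trail_lower (t := t) (Nat.zero_le τ) hτ
      omega
    · have := hupper σ (u + 1) hσ hσ' le_rfl
      have := lead_add_trail_upper (t := t) hσ' le_rfl
      omega
    · have := hlower σ τ hστ hτ
      have := hupper σ τ hσ hστ (hτ.trans (Nat.le_succ u))
      have := lead_add_trail_lower (t := t) hστ hτ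
      have := lead_add_trail_upper (t := t) hστ (hτ.trans (Nat.le_succ u))
      omega
    · exact (lead_add_trail_double hσ (by omega)).trans_le (hdouble σ τ hτσ hσ)

theorem strip_iff_of_row_zero (h0 : ∀ j, t 0 j = 0) : Strip u m t ↔
    (∀ τ ≤ u, ∑ j ∈ Finset.Ico 0 (τ + 1), t 1 j + ∑ j ∈ Finset.Ico τ (u + 1), t 2 j ≤ m) ∧
    (∀ τ, 1 ≤ τ → τ ≤ u + 1 →
      ∑ j ∈ Finset.Ico 1 (τ + 1), t 1 j + ∑ j ∈ Finset.Ico τ (u + 2), t 2 j ≤ m) ∧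
    ∑ j ∈ Finset.Ico 0 (u + 3), t 1 j + ∑ j ∈ Finset.Ico 0 (u + 2), t 2 j ≤ 2 * m := by
  have hmono : ∀ (r : Fin 3) {a b : ℕ} (c : ℕ), a ≤ b →
      ∑ j ∈ Finset.Ico b c, t r j ≤ ∑ j ∈ Finset.Ico a c, t r j := fun r a b c hab =>
    Finset.sum_le_sum_of_subset (Finset.Ico_subset_Ico_left hab)
  simp only [strip_iff, h0, Finset.sum_const_zero, zero_add]
  constructor
  · rintro ⟨hlower, hupper, hdouble, -⟩
    refine ⟨fun τ hτ => hlower 0 τ (Nat.zero_le τ) hτ, fun τ h1 hτ => hupper 1 τ le_rfl h1 hτ, ?_⟩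
    have h := hdouble 1 0 Nat.one_pos (by omega)
    have hrow := Finset.sum_Ico_consecutive (t 1) (Nat.zero_le 1) (show 1 ≤ u + 3 by omega)
    simp only [zero_add] at h
    omega
  · rintro ⟨hlower, hupper, hdouble⟩
    refine ⟨fun σ τ _ hτ => ?_, fun σ τ hσ hστ hτ => ?_, fun σ τ hτσ hσ => ?_, by omega⟩
    · have := hlower τ hτ
      have := hmono 1 (τ + 1) (Nat.zero_le σ)
      omega
    · have := hupper τ (hσ.trans hστ) hτ
      have := hmono 1 (τ + 1) hσ
      omega
    · have hrow := Finset.sum_Ico_consecutive (t 1) (Nat.zero_le (τ + 1))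
        (show τ + 1 ≤ u + 3 by omega)
      have := hmono 1 (u + 3) (show τ + 1 ≤ σ from hτσ)
      have := hmono 2 (u + 2) (Nat.zero_le τ)
      omega

theorem strip_iff_of_rows_zero (h0 : ∀ j, t 0 j = 0) (h1 : ∀ j, t 1 j = 0) : Strip u m t ↔
    ∑ j ∈ Finset.Ico 0 (u + 1), t 2 j ≤ m ∧ ∑ j ∈ Finset.Ico 1 (u + 2), t 2 j ≤ m := by
  have hmono : ∀ {a b : ℕ} (c : ℕ), a ≤ b →
      ∑ j ∈ Finset.Ico b c, t 2 j ≤ ∑ j ∈ Finset.Ico a c, t 2 j := fun c hab =>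
    Finset.sum_le_sum_of_subset (Finset.Ico_subset_Ico_left hab)
  simp only [strip_iff_of_row_zero h0, h1, Finset.sum_const_zero, zero_add]
  refine ⟨fun h => ⟨h.1 0 (Nat.zero_le u), h.2.1 1 le_rfl (by omega)⟩, fun h =>
    ⟨fun τ _ => (hmono _ (Nat.zero_le τ)).trans h.1, fun τ hτ _ => (hmono _ hτ).trans h.2, ?_⟩⟩
  have hfirst := Finset.sum_eq_sum_Ico_succ_bot (show 0 < u + 2 by omega) (t 2)
  have hfirst' := Finset.sum_eq_sum_Ico_succ_bot (show 0 < u + 1 by omega) (t 2)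
  simp only [zero_add] at hfirst hfirst'
  omega

end Inequalities

end Rows

section ToRows

variable {n i u m : ℕ} {s : ℕ × ℕ → ℕ}

/-- The rows `i - 2`, `i - 1` and `i` of `s`, in columns counted from `i`. If `i ≤ 2`, the rows that
do not exist are read off outside `R_i^+`. -/
def toRows (i : ℕ) (s : ℕ × ℕ → ℕ) : Rows := fun r j => s (r + i - 2, i + j)

theorem mem_SD_iff_strip (hi : 1 ≤ i) (hi' : i ≤ 3) (hn : 2 * n = 2 * i + (u + 1)) :
    s ∈ SD n i m ↔ (∀ β, ¬inR n i β → s β = 0) ∧ Rows.Strip u m (toRows i s) := by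
  have hzero : (∀ β, ¬inR n i β → s β = 0) → ∀ r : Fin 3, r + i ≤ 2 → ∀ j, toRows i s r j = 0 :=
    fun hs r hr j => hs _ fun h => by
      have : 1 ≤ r + i - 2 := h.1
      omega
  obtain rfl | rfl | rfl : i = 1 ∨ i = 2 ∨ i = 3 := by omega
  · exact (mem_SD_one hn).trans (and_congr_right fun hs =>
      (Rows.strip_iff_of_rows_zero (hzero hs 0 (by decide)) (hzero hs 1 (by decide))).symm)
  · exact (mem_SD_two hn).trans (and_congr_right fun hs =>
      (Rows.strip_iff_of_row_zero (hzero hs 0 (by decide))).symm)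
  · exact (mem_SD_three hn).trans (and_congr_right fun _ => (Rows.strip_iff (t := toRows 3 s)).symm)

theorem exists_toRows_eq (hi : i ≤ 3) (hs : ∀ β, ¬inR n i β → s β = 0) {t : Rows}
    (ht : t ≤ toRows i s) : ∃ s' ≤ s, toRows i s' = t := by
  refine ⟨fun β => if 1 ≤ β.1 ∧ β.1 ≤ i ∧ i ≤ β.2 then t (Fin.ofNat 3 (β.1 + 2 - i)) (β.2 - i)
    else 0, fun β => ?_, funext fun r => funext fun j => ?_⟩
  · dsimp only
    split_ifs with hβ
    · refine (ht _ _).trans_eq (congrArg s (Prod.ext ?_ (Nat.add_sub_cancel' hβ.2.2)))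
      simp only [Fin.ofNat]
      omega
    · exact Nat.zero_le _
  · dsimp only [toRows]
    split_ifs with hβ
    · congr 1
      · ext
        simp only [Fin.ofNat]
        omega
      · exact Nat.add_sub_cancel_left _ _
    · refine (Nat.eq_zero_of_le_zero ((ht r j).trans_eq (hs _ fun hR => hβ ?_))).symm
      exact ⟨hR.1, hR.2.1, hR.2.2.1⟩

theorem exists_mem_add_strip (hi : 1 ≤ i) (hi' : i ≤ 3) (hin : i < n) (hm : 1 ≤ m)
    (hs : s ∈ SD n i m) :
    ∃ d, (d = 1 ∨ d = 2 ∧ 3 ≤ i) ∧ d ≤ m ∧ s ∈ SD n i d + SD n i (m - d) := by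
  obtain ⟨u, hn⟩ : ∃ u, 2 * n = 2 * i + (u + 1) := ⟨2 * (n - i) - 1, by omega⟩
  simp only [mem_SD_iff_strip hi hi' hn, Set.mem_add] at hs ⊢
  obtain ⟨d, hd, hdm, t, ht, hstrip, hstrip_sub⟩ := hs.2.exists_split hm
  obtain ⟨s', hle, rfl⟩ := exists_toRows_eq hi' hs.1 ht
  refine ⟨d, hd.imp_right fun h => ⟨h.1, ?_⟩, hdm, s', ⟨fun β hβ => ?_, hstrip⟩,
    s - s', ⟨fun β hβ => ?_, hstrip_sub⟩, add_tsub_cancel_of_le hle⟩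
  · by_contra hi3
    exact h.2.ne' (hs.1 _ fun h => by have : 1 ≤ 0 + i - 2 := h.1; omega)
  · exact Nat.eq_zero_of_le_zero ((hle β).trans_eq (hs.1 β hβ))
  · rw [Pi.sub_apply, hs.1 β hβ, Nat.zero_sub]

end ToRows

/-- The double Dyck paths for `i = n`, each recorded as one list of roots. -/
def doublePaths (n : ℕ) : List (List (ℕ × ℕ)) :=
  (List.range (n - 1)).flatMap fun j =>
    ((paths n 1 j 0 (n - (j + 1)) ×ˢ paths n 2 j 0 (n - (j + 2))).filter
      fun P => ∀ c ∈ P.1, c ∉ P.2).map fun P => P.1 ++ P.2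

/-- The restriction to `T` of the truncation of `s` at one. -/
def unitPart (T : List (ℕ × ℕ)) (s : ℕ × ℕ → ℕ) (β : ℕ × ℕ) : ℕ :=
  if β ∈ T then min 1 (s β) else 0

section Self

variable {n m d : ℕ} {s s' : ℕ × ℕ → ℕ}

theorem not_isType1_self (n : ℕ) (L : List (ℕ × ℕ)) : ¬IsType1 n n L := by
  rintro ⟨-, hc, -, ⟨hh, hl⟩ | ⟨hh, hl⟩⟩
  · have hle : 1 ≤ n ∧ n ≤ 2 * n - n - 1 := IsPath.le ⟨hc, hh, hl⟩
    omega
  · have hle : 1 ≤ n ∧ n + 1 ≤ 2 * n - n := IsPath.le ⟨hc, hh, hl⟩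
    omega

theorem mem_doublePaths {P : List (ℕ × ℕ)} :
    P ∈ doublePaths n ↔ ∃ L₁ L₂, IsType2 n n L₁ L₂ ∧ L₁ ++ L₂ = P := by
  simp only [doublePaths, List.mem_flatMap, List.mem_range, List.mem_map, List.mem_filter,
    decide_eq_true_eq, Prod.exists, isType2_iff le_rfl, List.mem_product,
    show 2 * n - n = n by omega, Nat.lt_sub_iff_add_lt]
  constructor
  · rintro ⟨j, hj, L₁, L₂, ⟨⟨h₁, h₂⟩, hd⟩, rfl⟩
    exact ⟨L₁, L₂, ⟨j, hj, h₁, h₂, hd⟩, rfl⟩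
  · rintro ⟨L₁, L₂, ⟨j, hj, h₁, h₂, hd⟩, rfl⟩
    exact ⟨j, hj, L₁, L₂, ⟨⟨h₁, h₂⟩, hd⟩, rfl⟩

theorem mem_SD_self_iff : s ∈ SD n n m ↔
    (∀ β, ¬inR n n β → s β = 0) ∧ ∀ P ∈ doublePaths n, (P.map s).sum ≤ m := by
  simp only [SD, Set.mem_ofPred_eq, cB, or_true, if_true, mul_one, not_isType1_self,
    false_imp_iff, implies_true, true_and, mem_doublePaths]
  refine and_congr_right fun _ => ⟨?_, fun h L₁ L₂ hL => h _ ⟨L₁, L₂, hL, rfl⟩⟩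
  rintro h _ ⟨L₁, L₂, hL, rfl⟩
  exact h L₁ L₂ hL

theorem unitPart_le (T : List (ℕ × ℕ)) (s : ℕ × ℕ → ℕ) : unitPart T s ≤ s := fun β => by
  unfold unitPart
  split_ifs
  · exact min_le_right _ _
  · exact Nat.zero_le _

theorem mem_add_of_unitPart (hs : s ∈ SD n n m)
    (h : ∃ T, ∀ P ∈ doublePaths n, (P.map (unitPart T s)).sum ≤ d ∧
      (P.map (s - unitPart T s)).sum ≤ m - d) : s ∈ SD n n d + SD n n (m - d) := by
  obtain ⟨T, h⟩ := h
  have hsupp := (mem_SD_self_iff.1 hs).1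
  have hle := unitPart_le T s
  refine Set.mem_add.2 ⟨unitPart T s, mem_SD_self_iff.2 ⟨fun β hβ => ?_, fun P hP => (h P hP).1⟩,
    s - unitPart T s, mem_SD_self_iff.2 ⟨fun β hβ => ?_, fun P hP => (h P hP).2⟩,
    add_tsub_cancel_of_le hle⟩
  · exact Nat.eq_zero_of_le_zero ((hle β).trans_eq (hsupp β hβ))
  · rw [Pi.sub_apply, hsupp β hβ, Nat.zero_sub]

theorem doublePaths_two : doublePaths 2 = [[(1, 2), (1, 3), (2, 2)]] := by decide

theorem doublePaths_three : doublePaths 3 =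
    [[(1, 3), (1, 4), (1, 5), (2, 3), (2, 4)], [(1, 3), (1, 4), (2, 4), (2, 3), (3, 3)]] := by
  decide

theorem doublePaths_four : doublePaths 4 =
    [[(1, 4), (1, 5), (1, 6), (1, 7), (2, 4), (2, 5), (2, 6)],
     [(1, 4), (1, 5), (2, 5), (2, 6), (2, 4), (3, 4), (3, 5)],
     [(1, 4), (1, 5), (1, 6), (2, 6), (2, 4), (3, 4), (3, 5)],
     [(1, 4), (1, 5), (1, 6), (2, 6), (2, 4), (2, 5), (3, 5)],
     [(1, 4), (1, 5), (2, 5), (3, 5), (2, 4), (3, 4), (4, 4)]] := by decide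

theorem mem_add_two (hm : 1 ≤ m) (hs : s ∈ SD 2 2 m) : s ∈ SD 2 2 1 + SD 2 2 (m - 1) := by
  refine mem_add_of_unitPart hs ?_
  have h := (mem_SD_self_iff.1 hs).2
  simp only [doublePaths_two, List.forall_mem_singleton, List.map_cons,
    List.map_nil, List.sum_cons, List.sum_nil, Pi.sub_apply] at h ⊢
  by_cases h12 : 0 < s (1, 2)
  · exact ⟨[(1, 2)], by simp +decide only [unitPart, if_true, if_false]; omega⟩
  by_cases h13 : 0 < s (1, 3)
  · exact ⟨[(1, 3)], by simp +decide only [unitPart, if_true, if_false]; omega⟩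
  · exact ⟨[(2, 2)], by simp +decide only [unitPart, if_true, if_false]; omega⟩

theorem mem_add_three (hm : 1 ≤ m) (hs : s ∈ SD 3 3 m) : s ∈ SD 3 3 1 + SD 3 3 (m - 1) := by
  refine mem_add_of_unitPart hs ?_
  have h := (mem_SD_self_iff.1 hs).2
  simp only [doublePaths_three, List.forall_mem_cons, List.not_mem_nil, false_imp_iff,
    implies_true, and_true, List.map_cons, List.map_nil, List.sum_cons, List.sum_nil,
    Pi.sub_apply] at h ⊢
  by_cases h13 : 0 < s (1, 3)
  · exact ⟨[(1, 3)], by simp +decide only [unitPart, if_true, if_false]; omega⟩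
  by_cases h14 : 0 < s (1, 4)
  · exact ⟨[(1, 4)], by simp +decide only [unitPart, if_true, if_false]; omega⟩
  by_cases h23 : 0 < s (2, 3)
  · exact ⟨[(2, 3)], by simp +decide only [unitPart, if_true, if_false]; omega⟩
  by_cases h24 : 0 < s (2, 4)
  · exact ⟨[(2, 4)], by simp +decide only [unitPart, if_true, if_false]; omega⟩
  · exact ⟨[(1, 5), (3, 3)], by simp +decide only [unitPart, if_true, if_false]; omega⟩

theorem mem_add_four_of_antidiagonal (hs : s ∈ SD 4 4 m) (h14 : s (1, 4) = 0)
    (h15 : s (1, 5) = 0) (h24 : s (2, 4) = 0) (h26 : s (2, 6) = 0) (h35 : s (3, 5) = 0)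
    (h16 : 0 < s (1, 6)) (h25 : 0 < s (2, 5)) (h34 : 0 < s (3, 4)) :
    2 ≤ m ∧ s ∈ SD 4 4 2 + SD 4 4 (m - 2) := by
  have h := (mem_SD_self_iff.1 hs).2
  refine ⟨?_, mem_add_of_unitPart hs ⟨[(1, 6), (2, 5), (3, 4)], ?_⟩⟩ <;>
    simp +decide only [doublePaths_four, List.forall_mem_cons, List.not_mem_nil, false_imp_iff,
      implies_true, and_true, List.map_cons, List.map_nil, List.sum_cons, List.sum_nil,
      Pi.sub_apply, unitPart, if_true, if_false] at h ⊢ <;> omega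

theorem mem_add_four (hm : 1 ≤ m) (hs : s ∈ SD 4 4 m)
    (hA : ¬(s (1, 4) = 0 ∧ s (1, 5) = 0 ∧ s (2, 4) = 0 ∧ s (2, 6) = 0 ∧ s (3, 5) = 0 ∧
      0 < s (1, 6) ∧ 0 < s (2, 5) ∧ 0 < s (3, 4))) : s ∈ SD 4 4 1 + SD 4 4 (m - 1) := by
  refine mem_add_of_unitPart hs ?_
  have h := (mem_SD_self_iff.1 hs).2
  simp only [doublePaths_four, List.forall_mem_cons, List.not_mem_nil, false_imp_iff,
    implies_true, and_true, List.map_cons, List.map_nil, List.sum_cons, List.sum_nil,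
    Pi.sub_apply] at h ⊢
  by_cases h14 : 0 < s (1, 4)
  · exact ⟨[(1, 4)], by simp +decide only [unitPart, if_true, if_false]; omega⟩
  by_cases h15 : 0 < s (1, 5)
  · exact ⟨[(1, 5)], by simp +decide only [unitPart, if_true, if_false]; omega⟩
  by_cases h24 : 0 < s (2, 4)
  · exact ⟨[(2, 4)], by simp +decide only [unitPart, if_true, if_false]; omega⟩
  by_cases h26 : 0 < s (2, 6)
  · exact ⟨[(2, 6), (4, 4)], by simp +decide only [unitPart, if_true, if_false]; omega⟩
  by_cases h35 : 0 < s (3, 5)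
  · exact ⟨[(3, 5), (1, 7)], by simp +decide only [unitPart, if_true, if_false]; omega⟩
  by_cases h25 : 0 < s (2, 5)
  · exact ⟨[(2, 5)], by simp +decide only [unitPart, if_true, if_false, true_and]; omega⟩
  by_cases h16 : 0 < s (1, 6) ∧ (s (3, 4) = 0 ∨ 0 < s (4, 4) ∨ s (1, 7) = 0)
  · exact ⟨[(1, 6), (4, 4)], by simp +decide only [unitPart, if_true, if_false, true_and]; omega⟩
  by_cases h34 : 0 < s (3, 4)
  · exact ⟨[(3, 4), (1, 7)], by simp +decide only [unitPart, if_true, if_false, true_and]; omega⟩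
  · exact ⟨[(1, 7), (4, 4)], by simp +decide only [unitPart, if_true, if_false, true_and]; omega⟩

theorem exists_mem_add_self (hn : 1 ≤ n) (hn' : n ≤ 4) (hm : 1 ≤ m) (hs : s ∈ SD n n m) :
    ∃ d, (d = 1 ∨ d = 2 ∧ 3 ≤ n) ∧ d ≤ m ∧ s ∈ SD n n d + SD n n (m - d) := by
  obtain rfl | rfl | rfl | rfl : n = 1 ∨ n = 2 ∨ n = 3 ∨ n = 4 := by omega
  · refine ⟨1, .inl rfl, hm, mem_add_of_unitPart hs ⟨[], fun P hP => ?_⟩⟩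
    exact absurd hP (List.not_mem_nil (a := P))
  · exact ⟨1, .inl rfl, hm, mem_add_two hm hs⟩
  · exact ⟨1, .inl rfl, hm, mem_add_three hm hs⟩
  · by_cases hA : s (1, 4) = 0 ∧ s (1, 5) = 0 ∧ s (2, 4) = 0 ∧ s (2, 6) = 0 ∧ s (3, 5) = 0 ∧
        0 < s (1, 6) ∧ 0 < s (2, 5) ∧ 0 < s (3, 4)
    · obtain ⟨h14, h15, h24, h26, h35, h16, h25, h34⟩ := hA
      exact ⟨2, .inr ⟨rfl, by omega⟩,
        mem_add_four_of_antidiagonal hs h14 h15 h24 h26 h35 h16 h25 h34⟩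
    · exact ⟨1, .inl rfl, hm, mem_add_four hm hs hA⟩

end Self

theorem zero_mem_SD (n i m : ℕ) : (0 : ℕ × ℕ → ℕ) ∈ SD n i m := by
  have hsum : ∀ L : List (ℕ × ℕ), (L.map (0 : ℕ × ℕ → ℕ)).sum = 0 := fun L => List.sum_map_zero
  exact ⟨fun _ _ => rfl, fun L _ => (hsum L).trans_le (Nat.zero_le _),
    fun L₁ L₂ _ => (hsum _).trans_le (Nat.zero_le _)⟩

theorem SD_add_subset (n i k l : ℕ) : SD n i k + SD n i l ⊆ SD n i (k + l) := by
  rintro _ ⟨s, ⟨hs₀, hs₁, hs₂⟩, t, ⟨ht₀, ht₁, ht₂⟩, rfl⟩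
  have hsum : ∀ L : List (ℕ × ℕ), (L.map (s + t)).sum = (L.map s).sum + (L.map t).sum :=
    fun L => List.sum_map_add
  refine ⟨fun β hβ => ?_, fun L hL => ?_, fun L₁ L₂ hL => ?_⟩
  · simp [hs₀ β hβ, ht₀ β hβ]
  · exact (hsum L).trans_le (add_le_add (hs₁ L hL) (ht₁ L hL))
  · rw [add_mul]
    exact (hsum _).trans_le (add_le_add (hs₂ L₁ L₂ hL) (ht₂ L₁ L₂ hL))

theorem exists_mem_add {n i m : ℕ} {s : ℕ × ℕ → ℕ} (hi : 1 ≤ i) (hin : i ≤ n)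
    (hcase : i ≤ 3 ∨ n ≤ 4) (hm : 1 ≤ m) (hs : s ∈ SD n i m) :
    ∃ d, (d = 1 ∨ d = 2 ∧ 3 ≤ i) ∧ d ≤ m ∧ s ∈ SD n i d + SD n i (m - d) := by
  rcases hin.eq_or_lt with rfl | hin
  · exact exists_mem_add_self hi (by omega) hm hs
  · exact exists_mem_add_strip hi (by omega) hin hm hs

theorem SD_subset_add_epsB {n i m : ℕ} (hi : 1 ≤ i) (hin : i ≤ n) (hcase : i ≤ 3 ∨ n ≤ 4)
    (hm : epsB i ≤ m) : SD n i m ⊆ SD n i (epsB i) + SD n i (m - epsB i) := by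
  intro s hs
  unfold epsB at hm ⊢
  split_ifs at hm ⊢ with hi2
  · obtain ⟨d, hd, -, h⟩ := exists_mem_add hi hin hcase hm hs
    obtain rfl : d = 1 := by omega
    exact h
  obtain ⟨d, rfl | ⟨rfl, -⟩, -, h⟩ := exists_mem_add hi hin hcase (by omega) hs
  · obtain ⟨a, ha, b, hb, rfl⟩ := h
    obtain ⟨e, rfl | ⟨rfl, -⟩, hem, c, hc, f, hf, rfl⟩ :=
      exists_mem_add hi hin hcase (by omega) hb
    · exact ⟨a + c, SD_add_subset n i 1 1 ⟨a, ha, c, hc, rfl⟩, f, hf, add_assoc a c f⟩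
    · refine ⟨c, hc, a + f, ?_, add_left_comm c a f⟩
      rw [show m - 2 = 1 + (m - 1 - 2) by omega]
      exact SD_add_subset n i _ _ ⟨a, ha, f, hf, rfl⟩
  · exact h

/-- for `1 ≤ i ≤ n` with `i ≤ 3` or `n ≤ 4`, and all `k, l ≥ 0`,
`S(D, (k + ε_i·l)·ω_i) = S(D, k·ω_i) + S(D, ε_i·l·ω_i)`. -/
theorem SD_eps_minkowski (n i : ℕ) (hi1 : 1 ≤ i) (hin : i ≤ n)
    (hcase : i ≤ 3 ∨ n ≤ 4) (k l : ℕ) :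
    SD n i (k + epsB i * l) = SD n i k + SD n i (epsB i * l) := by
  refine (SD_add_subset n i _ _).antisymm' ?_
  induction l with
  | zero => exact fun s hs => ⟨s, hs, 0, zero_mem_SD n i _, add_zero s⟩
  | succ l ih =>
    intro s hs
    rw [mul_add_one, ← add_assoc] at hs
    obtain ⟨a, ha, b, hb, rfl⟩ :=
      SD_subset_add_epsB hi1 hin hcase (Nat.le_add_left _ _) hs
    rw [Nat.add_sub_cancel] at hb
    obtain ⟨c, hc, f, hf, rfl⟩ := ih hb
    refine ⟨c, hc, a + f, ?_, add_left_comm c a f⟩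
    rw [mul_add_one, add_comm]
    exact SD_add_subset n i _ _ ⟨a, ha, f, hf, rfl⟩
end

section
/- Define a partial order on R_i^+ by alpha_{j,k} <= alpha_{p,r} iff j >= p and k >= r, and for an integer l set R_i^+(l) := {alpha_{p,q} in R_i^+ : q <= l}. For s in Z_{>=0}^{R_i^+} let T^s be the set of minimal elements (with respect to <=) of {beta in R_i^+(2n-i) : s_beta ≠ 0}, and let t^s in {0,1}^{R_i^+} be the indicator vector of T^s. Statement: let m >= 1 and s in S(D, m*omega_i) be such that either every beta with s_beta ≠ 0 lies in R_i^+(2n-i-1), or (assuming i < n) every beta with s_beta ≠ 0 lies in {alpha_{p,q} : p <= i, i+1 <= q <= 2n-i}. Then s - t^s in S(D, (m-1)*omega_i). -/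
open scoped Pointwise

/-- The set of minimal elements (for the partial order `α_{j,k} ≤ α_{p,r} ↔ j ≥ p ∧ k ≥ r`)
of `{β ∈ R_i^+(2n-i) : s_β ≠ 0}`, where `R_i^+(l) = {α_{p,q} ∈ R_i^+ : q ≤ l}`. -/
def Tmin (n i : ℕ) (s : (ℕ × ℕ) → ℕ) : Set (ℕ × ℕ) :=
  {β | (inR n i β ∧ β.2 ≤ 2 * n - i ∧ s β ≠ 0) ∧
    ∀ γ, (inR n i γ ∧ γ.2 ≤ 2 * n - i ∧ s γ ≠ 0) → β.1 ≤ γ.1 → β.2 ≤ γ.2 → γ = β}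

/-- The indicator multi-exponent `t^s` of the set `T^s` of minimal elements. -/
noncomputable def tmin (n i : ℕ) (s : (ℕ × ℕ) → ℕ) : (ℕ × ℕ) → ℕ :=
  Set.indicator (Tmin n i s) fun _ => 1

/-!
For the order `α_{p,q} ↦ (p, q)` on `ℕ × ℕ`, opposite to the order on roots, steps of Dyck paths are
covering relations, so a type 1 Dyck path is a saturated chain of the box spanned by its ends. If
`s` is supported in such a box, the type 1 inequalities therefore say that every chain has
`s`-weight at most `m`; the type 2 inequalities follow, since a double path is a union of two
chains. In this description `t^s` is the indicator of the maximal elements of the support, and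
subtracting it lowers the bound on chain weights by one: any chain in the support can be extended by
a maximal element of the support, where `s` drops by one.
-/

/-- Every finite chain has `s`-weight at most `m`. For `s` supported in a box spanned by a type 1
Dyck path, this is equivalent to `s ∈ S(D, m·ω_i)`. -/
def ChainSumLE {α : Type*} [LE α] (s : α → ℕ) (m : ℕ) : Prop :=
  ∀ C : Finset α, IsChain (· ≤ ·) (C : Set α) → ∑ β ∈ C, s β ≤ m

theorem exists_isGreatest_of_isChain {α : Type*} [Preorder α] {C : Set α}
    (hC : IsChain (· ≤ ·) C) (hfin : C.Finite) (hne : C.Nonempty) : ∃ τ, IsGreatest C τ := by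
  obtain ⟨τ, hτ⟩ := hfin.exists_maximal hne
  exact ⟨τ, hτ.prop, fun β hβ => (hC.total hβ hτ.prop).elim id (hτ.le_of_ge hβ)⟩

namespace ChainSumLE

open Function (support)

variable {α : Type*} {s : α → ℕ} {m : ℕ}

section LE

variable [LE α]

theorem of_support_subset {S : Set α} (hsupp : support s ⊆ S)
    (h : ∀ C : Finset α, IsChain (· ≤ ·) (C : Set α) → (C : Set α) ⊆ S → ∑ β ∈ C, s β ≤ m) :
    ChainSumLE s m := by
  classical
  intro C hC
  rw [← Finset.sum_filter_of_ne (p := (· ∈ S)) fun β _ hβ => hsupp hβ]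
  exact h _ (hC.mono (Finset.coe_subset.2 (Finset.filter_subset _ C)))
    fun β hβ => (Finset.mem_filter.1 hβ).2

theorem finite_of_isChain (h : ChainSumLE s m) {C : Set α} (hC : IsChain (· ≤ ·) C)
    (hsupp : C ⊆ support s) : C.Finite := by
  by_contra hinf
  obtain ⟨F, hFC, hcard⟩ := Set.Infinite.exists_subset_card_eq hinf (m + 1)
  have hlt : m < ∑ β ∈ F, s β := calc
    m < F.card • 1 := by simp [hcard]
    _ ≤ ∑ β ∈ F, s β :=
      F.card_nsmul_le_sum s 1 fun β hβ => Nat.one_le_iff_ne_zero.2 (hsupp (hFC hβ))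
  exact hlt.not_ge (h F (hC.mono hFC))

end LE

section Preorder

variable [Preorder α]

theorem exists_le_maximal (h : ChainSumLE s m) {β : α} (hβ : β ∈ support s) :
    ∃ τ, β ≤ τ ∧ Maximal (· ∈ support s) τ := by
  refine zorn_le_nonempty₀ (support s) (fun C hCs hC γ hγ => ?_) β hβ
  obtain ⟨τ, hτ⟩ := exists_isGreatest_of_isChain hC (h.finite_of_isChain hC hCs) ⟨γ, hγ⟩
  exact ⟨τ, hCs hτ.1, hτ.2⟩

theorem sub_indicator_maximal (h : ChainSumLE s m) :
    ChainSumLE (fun β => s β - {τ | Maximal (· ∈ support s) τ}.indicator (fun _ => 1) β)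
      (m - 1) := by
  classical
  set t : α → ℕ := {τ | Maximal (· ∈ support s) τ}.indicator fun _ => 1
  refine of_support_subset (S := support s) (fun β hβ hs => hβ (by simp [hs])) fun C hC hCs => ?_
  obtain rfl | hne := C.eq_empty_or_nonempty
  · simp
  obtain ⟨β, hβC, hβ⟩ := exists_isGreatest_of_isChain hC C.finite_toSet hne
  obtain ⟨τ, hβτ, hτ⟩ := h.exists_le_maximal (hCs hβC)
  have hchain : IsChain (· ≤ ·) ((insert τ C : Finset α) : Set α) := by
    rw [Finset.coe_insert]
    exact hC.insert fun γ hγ _ => .inr ((hβ hγ).trans hβτ)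
  have hτlt : s τ - t τ < s τ := by
    have htτ : t τ = 1 := Set.indicator_of_mem (s := {τ | Maximal (· ∈ support s) τ}) hτ _
    have : s τ ≠ 0 := hτ.prop
    omega
  refine Nat.le_sub_one_of_lt ?_
  calc ∑ γ ∈ C, (s γ - t γ)
      ≤ ∑ γ ∈ insert τ C, (s γ - t γ) := Finset.sum_le_sum_of_subset (Finset.subset_insert τ C)
    _ < ∑ γ ∈ insert τ C, s γ :=
      Finset.sum_lt_sum (fun γ _ => Nat.sub_le _ _) ⟨τ, Finset.mem_insert_self τ C, hτlt⟩
    _ ≤ m := h _ hchain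

theorem sum_map_le_of_isChain_lt (h : ChainSumLE s m) {L : List α} (hL : L.IsChain (· < ·)) :
    (L.map s).sum ≤ m := by
  classical
  have hlt : L.Pairwise (· < ·) := hL.pairwise
  rw [← List.sum_toFinset s (hlt.imp ne_of_lt)]
  have hcomp : L.Pairwise fun β γ => β ≤ γ ∨ γ ≤ β := hlt.imp fun hβγ => .inl hβγ.le
  have : Std.Symm fun β γ : α => β ≤ γ ∨ γ ≤ β := ⟨fun _ _ => Or.symm⟩
  exact h _ (by simpa only [List.coe_toFinset] using! hcomp.set_pairwise)

end Preorder

end ChainSumLE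

theorem exists_isChain_covBy_of_isChain {α : Type*} [PartialOrder α] [LocallyFiniteOrder α]
    {x y : α} (hxy : x ≤ y) {C : Finset α} (hC : IsChain (· ≤ ·) (C : Set α))
    (hCxy : (C : Set α) ⊆ Set.Icc x y) :
    ∃ P : List α, P.IsChain (· ⋖ ·) ∧ P.head? = some x ∧ P.getLast? = some y ∧
      (∀ z ∈ P, z ∈ Set.Icc x y) ∧ ∀ z ∈ C, z ∈ P := by
  classical
  induction hN : (Finset.Icc x y).card using Nat.strong_induction_on generalizing y C with
  | _ N ih =>
  obtain rfl | hlt := hxy.eq_or_lt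
  · exact ⟨[x], .singleton x, rfl, rfl, by simp, fun z hz => by simpa using hCxy hz⟩
  have hbelow : IsChain (· ≤ ·) (C.erase y : Set α) := hC.mono (Finset.erase_subset y C)
  -- Recurse below a lower cover `z` of `y` that bounds all of `C` except `y` itself.
  obtain ⟨c, hc, hmax⟩ := exists_isGreatest_of_isChain
    (hbelow.insert fun z hz _ => .inl (hCxy (Finset.mem_of_mem_erase hz)).1)
    ((C.erase y).finite_toSet.insert x) (Set.insert_nonempty _ _)
  have hcy : c < y := by
    obtain rfl | hc := hc
    · exact hlt
    · exact (hCxy (Finset.mem_of_mem_erase hc)).2.lt_of_ne (Finset.ne_of_mem_erase hc)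
  obtain ⟨z, hcz, hzy⟩ := exists_le_covBy_of_lt hcy
  have hxz : x ≤ z := (hmax (Set.mem_insert _ _)).trans hcz
  obtain ⟨P, hP, hhead, hlast, hmem, hsub⟩ := ih _
    (hN ▸ Finset.card_lt_card (Finset.Icc_ssubset_Icc_right hxy le_rfl hzy.lt)) hxz hbelow
    (fun w hw => ⟨(hCxy (Finset.mem_of_mem_erase hw)).1, (hmax (.inr hw)).trans hcz⟩) rfl
  refine ⟨P ++ [y], ?_, by simp [hhead], by simp, ?_, fun w hw => ?_⟩
  · exact hP.append (.singleton y) (by simpa [hlast] using hzy)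
  · simp only [List.mem_append, List.mem_singleton]
    rintro w (hw | rfl)
    · exact Set.Icc_subset_Icc_right hzy.le (hmem w hw)
    · exact Set.right_mem_Icc.2 hxy
  · obtain rfl | hwy := eq_or_ne w y
    · simp
    · exact List.mem_append_left _ (hsub w (Finset.mem_erase.2 ⟨hwy, hw⟩))

theorem rootStep_iff_covBy {a b : ℕ × ℕ} : RootStep a b ↔ a ⋖ b := by
  obtain ⟨a₁, a₂⟩ := a
  obtain ⟨b₁, b₂⟩ := b
  simp only [RootStep, Prod.mk_covBy_mk_iff, Order.covBy_iff_add_one_eq]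
  omega

theorem ChainSumLE.sum_map_le_of_isChain_rootStep {s : ℕ × ℕ → ℕ} {m : ℕ} (h : ChainSumLE s m)
    {L : List (ℕ × ℕ)} (hL : L.IsChain RootStep) : (L.map s).sum ≤ m :=
  h.sum_map_le_of_isChain_lt (hL.imp fun _ _ hab => (rootStep_iff_covBy.1 hab).lt)

/-- `x` and `y` are the first and last roots of a type 1 Dyck path, of either kind.
For `i = n` no such path exists, and `Set.Icc x y` is empty. -/
def IsType1Ends (n i : ℕ) (x y : ℕ × ℕ) : Prop :=
  (x = (1, i) ∧ y = (i, 2 * n - i - 1)) ∨ (x = (1, i + 1) ∧ y = (i, 2 * n - i))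

theorem IsType2.sum_map_append_le {n i m : ℕ} {s : ℕ × ℕ → ℕ} (h : ChainSumLE s m)
    {L₁ L₂ : List (ℕ × ℕ)} (hL : IsType2 n i L₁ L₂) : ((L₁ ++ L₂).map s).sum ≤ m * 2 := by
  obtain ⟨-, -, -, -, -, hL₁, hL₂, -⟩ := hL
  have h₁ := h.sum_map_le_of_isChain_rootStep hL₁
  have h₂ := h.sum_map_le_of_isChain_rootStep hL₂
  rw [List.map_append, List.sum_append]
  omega

namespace IsType1Ends

open Function (support)

variable {n i m : ℕ} {x y z : ℕ × ℕ} {s : ℕ × ℕ → ℕ}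

theorem inR_and_snd_le_of_mem_Icc (hxy : IsType1Ends n i x y) (hz : z ∈ Set.Icc x y) :
    inR n i z ∧ z.2 ≤ 2 * n - i := by
  obtain ⟨hxz, hzy⟩ := hz
  obtain ⟨rfl, rfl⟩ | ⟨rfl, rfl⟩ := hxy <;> simp only [inR, Prod.le_def] at * <;> omega

theorem eq_zero_of_support_subset_Icc (hxy : IsType1Ends i i x y) (hs : support s ⊆ Set.Icc x y) :
    s = 0 := by
  have hempty : Set.Icc x y = ∅ := by
    refine Set.eq_empty_of_forall_notMem fun z ⟨hxz, hzy⟩ => ?_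
    obtain ⟨rfl, rfl⟩ | ⟨rfl, rfl⟩ := hxy <;> simp only [Prod.le_def] at hxz hzy <;> omega
  rwa [hempty, Set.subset_empty_iff, Function.support_eq_empty_iff] at hs

theorem tmin_eq (hxy : IsType1Ends n i x y) (hs : support s ⊆ Set.Icc x y) :
    tmin n i s = {τ | Maximal (· ∈ support s) τ}.indicator fun _ => 1 := by
  have hR {β} (hβ : s β ≠ 0) := hxy.inR_and_snd_le_of_mem_Icc (hs hβ)
  have hT : Tmin n i s = {τ | Maximal (· ∈ support s) τ} := by
    ext τ
    refine ⟨fun ⟨hτ, hmax⟩ => ⟨hτ.2.2, fun γ hγ hτγ => ?_⟩, fun hτ => ⟨?_, fun γ hγ h₁ h₂ => ?_⟩⟩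
    · exact (hmax γ ⟨(hR hγ).1, (hR hγ).2, hγ⟩ hτγ.1 hτγ.2).le
    · exact ⟨(hR hτ.prop).1, (hR hτ.prop).2, hτ.prop⟩
    · exact (hτ.eq_of_le hγ.2.2 ⟨h₁, h₂⟩).symm
  rw [tmin, hT]

theorem chainSumLE_of_mem_SD (hxy : IsType1Ends n i x y) (hs : support s ⊆ Set.Icc x y)
    (hSD : s ∈ SD n i m) : ChainSumLE s m := by
  classical
  refine .of_support_subset hs fun C hC hCxy => ?_
  obtain rfl | ⟨β, hβ⟩ := C.eq_empty_or_nonempty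
  · simp
  obtain ⟨P, hP, hhead, hlast, hmem, hCP⟩ :=
    exists_isChain_covBy_of_isChain ((hCxy hβ).1.trans (hCxy hβ).2) hC hCxy
  have hP₁ : IsType1 n i P := by
    refine ⟨by rintro rfl; simp at hhead, hP.imp fun _ _ => rootStep_iff_covBy.2,
      fun z hz => (hxy.inR_and_snd_le_of_mem_Icc (hmem z hz)).1, ?_⟩
    obtain ⟨rfl, rfl⟩ | ⟨rfl, rfl⟩ := hxy
    exacts [.inl ⟨hhead, hlast⟩, .inr ⟨hhead, hlast⟩]
  have hnodup : P.Nodup := (hP.imp fun _ _ => CovBy.lt).pairwise.imp ne_of_lt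
  calc ∑ β ∈ C, s β ≤ ∑ β ∈ P.toFinset, s β :=
        Finset.sum_le_sum_of_subset fun z hz => List.mem_toFinset.2 (hCP z hz)
    _ = (P.map s).sum := List.sum_toFinset s hnodup
    _ ≤ m := hSD.2.1 P hP₁

theorem mem_SD_of_chainSumLE (hxy : IsType1Ends n i x y) (hs : support s ⊆ Set.Icc x y)
    (h : ChainSumLE s m) : s ∈ SD n i m := by
  refine ⟨fun β hβ => ?_, fun L hL => h.sum_map_le_of_isChain_rootStep hL.2.1, fun L₁ L₂ hL => ?_⟩
  · by_contra hsβ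
    exact hβ (hxy.inR_and_snd_le_of_mem_Icc (hs hsβ)).1
  obtain rfl | hin := eq_or_ne i n
  · simp [hxy.eq_zero_of_support_subset_Icc hs, Pi.zero_def]
  · have hi : i ≠ 1 := by
      obtain ⟨j, hj, hji, -⟩ := hL
      omega
    simpa [cB, hi, hin] using hL.sum_map_append_le h

theorem mem_SD_iff (hxy : IsType1Ends n i x y) (hs : support s ⊆ Set.Icc x y) :
    s ∈ SD n i m ↔ ChainSumLE s m :=
  ⟨hxy.chainSumLE_of_mem_SD hs, hxy.mem_SD_of_chainSumLE hs⟩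

end IsType1Ends

/-- if `s ∈ S(D, m·ω_i)` is supported on `R_i^+(2n-i-1)`, or (for `i < n`)
on `{α_{p,q} : p ≤ i, i+1 ≤ q ≤ 2n-i}`, then `s - t^s ∈ S(D, (m-1)·ω_i)`. -/
theorem SD_sub_min (n i : ℕ) (hi1 : 1 ≤ i) (hin : i ≤ n) (m : ℕ) (hm : 1 ≤ m)
    (s : (ℕ × ℕ) → ℕ) (hs : s ∈ SD n i m)
    (hsupp :
      (∀ β, s β ≠ 0 → inR n i β ∧ β.2 ≤ 2 * n - i - 1) ∨
      (i < n ∧ ∀ β, s β ≠ 0 → β.1 ≤ i ∧ i + 1 ≤ β.2 ∧ β.2 ≤ 2 * n - i)) :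
    (fun β => s β - tmin n i s β) ∈ SD n i (m - 1) := by
  obtain ⟨x, y, hxy, hsub⟩ : ∃ x y, IsType1Ends n i x y ∧ Function.support s ⊆ Set.Icc x y := by
    have hR : ∀ β, s β ≠ 0 → inR n i β := fun β hβ => not_imp_comm.1 (hs.1 β) hβ
    obtain h | ⟨-, h⟩ := hsupp
    · refine ⟨_, _, .inl ⟨rfl, rfl⟩, fun β hβ => ?_⟩
      obtain ⟨⟨h₁, h₂, h₃, -⟩, h₄⟩ := h β hβ
      exact ⟨⟨h₁, h₃⟩, h₂, h₄⟩
    · refine ⟨_, _, .inr ⟨rfl, rfl⟩, fun β hβ => ?_⟩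
      obtain ⟨h₂, h₃, h₄⟩ := h β hβ
      exact ⟨⟨(hR β hβ).1, h₃⟩, h₂, h₄⟩
  have hsub' : (Function.support fun β => s β - tmin n i s β) ⊆ Set.Icc x y :=
    fun β hβ => hsub fun h => hβ (by simp [h])
  rw [hxy.mem_SD_iff hsub', hxy.tmin_eq hsub]
  exact ((hxy.mem_SD_iff hsub).1 hs).sub_indicator_maximal
end

section
/- Let n = 4 and i = 4, and let s in Z_{>=0}^{R_4^+} be the vector with s_beta = 1 for beta in {alpha_{1,6}, alpha_{2,5}, alpha_{3,4}} and s_beta = 0 for all other beta. Then s belongs to S(D, 2*omega_4), but s does not belong to the Minkowski sum S(D, omega_4) + S(D, omega_4). -/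
open scoped Pointwise

/-!
Every step of a path raises `p + q` by one, so a single path meets the antidiagonal `p + q = 7`,
which carries the three roots `α_{1,6}, α_{2,5}, α_{3,4}`, at most once, and a double path meets it
at most twice. On the other hand any two of the three roots lie on a common double path, so by
integrality a point of `S(D, ω₄)` has total weight at most `1` on them. A sum of two such points
therefore has weight at most `2` there, whereas `s` has weight `3`.
-/

section ListSums

variable {ι M : Type*}

theorem list_sum_map_le_of_pairwise [AddMonoid M] [LE M] {f : ι → M} {c : M} (hc : 0 ≤ c)
    {L : List ι} (hle : ∀ x ∈ L, f x ≤ c) (hL : L.Pairwise fun x y => f x = 0 ∨ f y = 0) :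
    (L.map f).sum ≤ c := by
  induction L with
  | nil => simpa using hc
  | cons x L ih =>
    rw [List.forall_mem_cons] at hle
    rw [List.pairwise_cons] at hL
    rw [List.map_cons, List.sum_cons]
    by_cases hx : f x = 0
    · rw [hx, zero_add]
      exact ih hle.2 hL.2
    · have htail : (L.map f).sum = 0 :=
        List.sum_eq_zero <| List.forall_mem_map.2 fun y hy => (hL.1 y hy).resolve_left hx
      rw [htail, add_zero]
      exact hle.1

theorem finset_sum_le_list_sum_map [AddCommMonoid M] [LE M] [CanonicallyOrderedAdd M] (f : ι → M)
    {A : Finset ι} {L : List ι} (hA : ∀ x ∈ A, x ∈ L) :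
    ∑ x ∈ A, f x ≤ (L.map f).sum := by
  have hle : A.val ≤ (L : Multiset ι) := (Multiset.le_iff_subset A.nodup).2 fun x hx => hA x hx
  obtain ⟨B, hB⟩ := Multiset.le_iff_exists_add.1 hle
  calc ∑ x ∈ A, f x ≤ (A.val.map f).sum + (B.map f).sum := le_self_add
    _ = (L.map f).sum := by
      rw [← Multiset.sum_add, ← Multiset.map_add, ← hB, Multiset.map_coe, Multiset.sum_coe]

end ListSums

theorem RootStep.add_lt_add {a b : ℕ × ℕ} (h : RootStep a b) : a.1 + a.2 < b.1 + b.2 := by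
  unfold RootStep at h
  omega

theorem one_le_cB (n i : ℕ) : 1 ≤ cB n i := by
  unfold cB
  split_ifs <;> decide

section Antidiagonal

variable {n i r c : ℕ} {s : ℕ × ℕ → ℕ}

theorem sum_map_le_of_isChain_rootStep (hs : ∀ β, s β ≠ 0 → β.1 + β.2 = r)
    (hc : ∀ β, s β ≤ c) {L : List (ℕ × ℕ)} (hL : L.IsChain RootStep) : (L.map s).sum ≤ c := by
  have hlt : L.Pairwise fun a b => a.1 + a.2 < b.1 + b.2 :=
    haveI : IsTrans (ℕ × ℕ) fun a b => a.1 + a.2 < b.1 + b.2 := ⟨fun _ _ _ => lt_trans⟩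
    (hL.imp fun _ _ => RootStep.add_lt_add).pairwise
  refine list_sum_map_le_of_pairwise c.zero_le (fun β _ => hc β) (hlt.imp fun {a b} hab => ?_)
  by_contra! h
  exact hab.ne ((hs a h.1).trans (hs b h.2).symm)

theorem mem_SD_two_mul_of_antidiagonal (hR : ∀ β, s β ≠ 0 → inR n i β)
    (hs : ∀ β, s β ≠ 0 → β.1 + β.2 = r) (hc : ∀ β, s β ≤ c) : s ∈ SD n i (2 * c) := by
  refine ⟨fun β => not_imp_comm.1 (hR β), fun L hL => ?_, fun L₁ L₂ hL => ?_⟩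
  · obtain ⟨-, hchain, -⟩ := hL
    exact (sum_map_le_of_isChain_rootStep hs hc hchain).trans (by omega)
  · obtain ⟨-, -, -, -, -, hchain₁, hchain₂, -⟩ := hL
    calc ((L₁ ++ L₂).map s).sum = (L₁.map s).sum + (L₂.map s).sum := by
          rw [List.map_append, List.sum_append]
      _ ≤ c + c := add_le_add (sum_map_le_of_isChain_rootStep hs hc hchain₁)
          (sum_map_le_of_isChain_rootStep hs hc hchain₂)
      _ = 2 * c := (two_mul c).symm
      _ ≤ 2 * c * cB n i := Nat.le_mul_of_pos_right _ (one_le_cB n i)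

end Antidiagonal

/-- The roots in `A` lie on a common double Dyck path of `R_i^+`. -/
def LieOnDoublePath (n i : ℕ) (A : Finset (ℕ × ℕ)) : Prop :=
  ∃ L₁ L₂, IsType2 n i L₁ L₂ ∧ ∀ β ∈ A, β ∈ L₁ ++ L₂

section CommonPaths

variable {n i m : ℕ} {t : ℕ × ℕ → ℕ}

theorem sum_le_of_mem_SD (ht : t ∈ SD n i m) {A : Finset (ℕ × ℕ)} (hA : LieOnDoublePath n i A) :
    ∑ β ∈ A, t β ≤ m * cB n i := by
  obtain ⟨L₁, L₂, hL, hAL⟩ := hA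
  exact (finset_sum_le_list_sum_map t hAL).trans (ht.2.2 L₁ L₂ hL)

theorem add_le_of_mem_SD (ht : t ∈ SD n i m) {β γ : ℕ × ℕ} (hβγ : β ≠ γ)
    (pβγ : LieOnDoublePath n i {β, γ}) : t β + t γ ≤ m * cB n i :=
  calc t β + t γ = ∑ x ∈ {β, γ}, t x := (Finset.sum_pair hβγ).symm
    _ ≤ m * cB n i := sum_le_of_mem_SD ht pβγ

-- The three pair bounds count each root twice; integrality makes the division by `2` round down.
theorem add_add_le_of_mem_SD (ht : t ∈ SD n i m) {β γ δ : ℕ × ℕ}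
    (hβγ : β ≠ γ) (hβδ : β ≠ δ) (hγδ : γ ≠ δ) (pβγ : LieOnDoublePath n i {β, γ})
    (pβδ : LieOnDoublePath n i {β, δ}) (pγδ : LieOnDoublePath n i {γ, δ}) :
    t β + t γ + t δ ≤ 3 * (m * cB n i) / 2 := by
  have h₁ := add_le_of_mem_SD ht hβγ pβγ
  have h₂ := add_le_of_mem_SD ht hβδ pβδ
  have h₃ := add_le_of_mem_SD ht hγδ pγδ
  omega

end CommonPaths

theorem lieOnDoublePath_16_25 : LieOnDoublePath 4 4 {(1, 6), (2, 5)} := by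
  have h₁ : [(1, 4), (1, 5), (1, 6), (1, 7)].IsChain RootStep := by simp [RootStep]
  have h₂ : [(2, 4), (2, 5), (2, 6)].IsChain RootStep := by simp [RootStep]
  exact ⟨_, _, ⟨1, by simp, by simp, by simp, by simp, h₁, h₂, by simp [inR]⟩, by simp⟩

theorem lieOnDoublePath_16_34 : LieOnDoublePath 4 4 {(1, 6), (3, 4)} := by
  have h₁ : [(1, 4), (1, 5), (1, 6), (2, 6)].IsChain RootStep := by simp [RootStep]
  have h₂ : [(2, 4), (3, 4), (3, 5)].IsChain RootStep := by simp [RootStep]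
  exact ⟨_, _, ⟨2, by simp, by simp, by simp, by simp, h₁, h₂, by simp [inR]⟩, by simp⟩

theorem lieOnDoublePath_25_34 : LieOnDoublePath 4 4 {(2, 5), (3, 4)} := by
  have h₁ : [(1, 4), (1, 5), (2, 5), (2, 6)].IsChain RootStep := by simp [RootStep]
  have h₂ : [(2, 4), (3, 4), (3, 5)].IsChain RootStep := by simp [RootStep]
  exact ⟨_, _, ⟨2, by simp, by simp, by simp, by simp, h₁, h₂, by simp [inR]⟩, by simp⟩

theorem sum_three_le_one_of_mem_SD {t : ℕ × ℕ → ℕ} (ht : t ∈ SD 4 4 1) :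
    t (1, 6) + t (2, 5) + t (3, 4) ≤ 1 := by
  simpa [cB] using add_add_le_of_mem_SD ht (by decide) (by decide) (by decide)
    lieOnDoublePath_16_25 lieOnDoublePath_16_34 lieOnDoublePath_25_34

/-- for `n = 4`, `i = 4`, the multi-exponent with value `1` exactly at
`α_{1,6}, α_{2,5}, α_{3,4}` lies in `S(D, 2·ω₄)` but not in `S(D, ω₄) + S(D, ω₄)`. -/
theorem SD_counterexample_i4 :
    (fun β => if β = (1, 6) ∨ β = (2, 5) ∨ β = (3, 4) then 1 else 0) ∈ SD 4 4 2 ∧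
    (fun β => if β = (1, 6) ∨ β = (2, 5) ∨ β = (3, 4) then 1 else 0) ∉
      SD 4 4 1 + SD 4 4 1 := by
  constructor
  · refine mem_SD_two_mul_of_antidiagonal (r := 7) (c := 1) (fun β hβ => ?_) (fun β hβ => ?_)
      fun β => ?_
    · obtain rfl | rfl | rfl := of_not_not fun h => hβ (if_neg h) <;> simp [inR]
    · obtain rfl | rfl | rfl := of_not_not fun h => hβ (if_neg h) <;> rfl
    · split_ifs <;> decide
  · rintro ⟨a, ha, b, hb, hab⟩
    have ha₁ := sum_three_le_one_of_mem_SD ha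
    have hb₁ := sum_three_le_one_of_mem_SD hb
    have h₁ : a (1, 6) + b (1, 6) = 1 := congrFun hab (1, 6)
    have h₂ : a (2, 5) + b (2, 5) = 1 := congrFun hab (2, 5)
    have h₃ : a (3, 4) + b (3, 4) = 1 := congrFun hab (3, 4)
    omega
end

section
/- Let n = 4 and i = 3, and let s in Z_{>=0}^{R_3^+} be the vector with s_beta = 1 for beta in {alpha_{1,3}, alpha_{1,4}, alpha_{1,6}, alpha_{2,5}, alpha_{3,3}} and s_beta = 0 for all other beta. Then s belongs to S(D, 2*omega_3), but s does not belong to the Minkowski sum S(D, omega_3) + S(D, omega_3). -/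
open scoped Pointwise

/-!
Dyck paths are chains in `ℕ × ℕ`, so a path meets an antichain at most once. The five roots split
into the antichains `{α_{1,3}}`, `{α_{1,4}, α_{3,3}}`, `{α_{1,6}, α_{2,5}}`, and the endpoints of
each kind of path leave only few of these within reach; this gives all bounds for `2·ω₃`.

In a decomposition `s = a + b` with `a, b ∈ S(D, ω₃)`, type 1 paths through two of the five roots
put `α_{1,3}, α_{2,5}` in one summand and `α_{1,4}, α_{3,3}` in the other. Whichever summand
receives `α_{1,6}` then has sum `3 > c₃ = 2` along a double path.
-/

section DyckPath

variable {L : List (ℕ × ℕ)} {a b x : ℕ × ℕ}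

theorem RootStep.lt (h : RootStep a b) : a < b :=
  Prod.lt_iff.mpr (by unfold RootStep at h; omega)

theorem sortedLT_of_isChain_rootStep (hL : L.IsChain RootStep) : L.SortedLT :=
  List.sortedLT_iff_isChain.mpr (hL.imp fun _ _ => RootStep.lt)

theorem head_le_of_isChain_rootStep (hL : L.IsChain RootStep) (ha : L.head? = some a)
    (hx : x ∈ L) : a ≤ x := by
  obtain ⟨t, rfl⟩ := List.head?_eq_some_iff.mp ha
  exact (sortedLT_of_isChain_rootStep hL).sortedLE.pairwise.rel_head hx

theorem le_getLast_of_isChain_rootStep (hL : L.IsChain RootStep) (hb : L.getLast? = some b)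
    (hx : x ∈ L) : x ≤ b := by
  obtain ⟨t, rfl⟩ := List.getLast?_eq_some_iff.mp hb
  simpa using (sortedLT_of_isChain_rootStep hL).sortedLE.pairwise.rel_getLast hx

end DyckPath

section AntichainCover

variable {α : Type*}

theorem card_le_card_of_antichain_cover [LE α] {C : Finset α} (hC : IsChain (· ≤ ·) (C : Set α))
    {F : Finset (Finset α)} (hF : ∀ A ∈ F, IsAntichain (· ≤ ·) (A : Set α))
    (hcover : ∀ x ∈ C, ∃ A ∈ F, x ∈ A) : C.card ≤ F.card :=
  Finset.card_le_card_of_forall_subsingleton (· ∈ ·) hcover fun A hA =>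
    inter_subsingleton_of_isChain_of_isAntichain hC (hF A hA)

theorem isChain_setOf_mem_of_sortedLT [Preorder α] {L : List α} (hL : L.SortedLT) :
    IsChain (· ≤ ·) {x | x ∈ L} :=
  Set.range_list_get L ▸ hL.strictMono_get.monotone.isChain_range

variable [DecidableEq α]

/-- The multi-exponent `s` with `s_β = 1` for `β ∈ T` and `s_β = 0` otherwise. -/
def multiExponent (T : Finset α) (β : α) : ℕ := if β ∈ T then 1 else 0

theorem sum_map_multiExponent {L : List α} (hL : L.Nodup) (T : Finset α) :
    (L.map (multiExponent T)).sum = (L.toFinset ∩ T).card := by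
  rw [← List.sum_toFinset _ hL, ← Finset.filter_mem_eq_inter, Finset.card_filter]
  rfl

theorem sum_map_multiExponent_le_card [Preorder α] {L : List α} (hL : L.SortedLT)
    {T : Finset α} {F : Finset (Finset α)} (hF : ∀ A ∈ F, IsAntichain (· ≤ ·) (A : Set α))
    (hcover : ∀ x ∈ T, x ∈ L → ∃ A ∈ F, x ∈ A) :
    (L.map (multiExponent T)).sum ≤ F.card := by
  rw [sum_map_multiExponent hL.nodup]
  have hchain : IsChain (· ≤ ·) ((L.toFinset ∩ T : Finset α) : Set α) :=
    (isChain_setOf_mem_of_sortedLT hL).mono fun x hx =>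
      List.mem_toFinset.mp (Finset.mem_inter.mp hx).1
  refine card_le_card_of_antichain_cover hchain hF fun x hx => ?_
  rw [Finset.mem_inter, List.mem_toFinset] at hx
  exact hcover x hx.2 hx.1

end AntichainCover

/-- The support `α_{1,3}, α_{1,4}, α_{1,6}, α_{2,5}, α_{3,3}` of the counterexample. -/
def fiveRoots : Finset (ℕ × ℕ) := {(1, 3), (1, 4), (1, 6), (2, 5), (3, 3)}

section Membership

variable {L : List (ℕ × ℕ)}

theorem sum_fiveRoots_le_three (hL : L.IsChain RootStep) :
    (L.map (multiExponent fiveRoots)).sum ≤ 3 := by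
  have hcover : ∀ x ∈ fiveRoots, ∃ A ∈
      ({{(1, 3)}, {(1, 4), (3, 3)}, {(1, 6), (2, 5)}} : Finset (Finset (ℕ × ℕ))), x ∈ A := by
    decide
  exact sum_map_multiExponent_le_card (sortedLT_of_isChain_rootStep hL)
    (by simp [isAntichain_insert]) fun x hx _ => hcover x hx

theorem sum_fiveRoots_le_two_of_getLast (hL : L.IsChain RootStep)
    (hlast : L.getLast? = some (3, 4)) : (L.map (multiExponent fiveRoots)).sum ≤ 2 := by
  have hcover : ∀ x ∈ fiveRoots, x ≤ (3, 4) → ∃ A ∈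
      ({{(1, 3)}, {(1, 4), (3, 3)}} : Finset (Finset (ℕ × ℕ))), x ∈ A := by
    decide
  exact sum_map_multiExponent_le_card (sortedLT_of_isChain_rootStep hL)
    (by simp [isAntichain_insert])
    fun x hx hxL => hcover x hx (le_getLast_of_isChain_rootStep hL hlast hxL)

theorem sum_fiveRoots_le_two_of_head (hL : L.IsChain RootStep)
    (hhead : L.head? = some (1, 4)) : (L.map (multiExponent fiveRoots)).sum ≤ 2 := by
  have hcover : ∀ x ∈ fiveRoots, (1, 4) ≤ x → ∃ A ∈
      ({{(1, 4)}, {(1, 6), (2, 5)}} : Finset (Finset (ℕ × ℕ))), x ∈ A := by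
    decide
  exact sum_map_multiExponent_le_card (sortedLT_of_isChain_rootStep hL)
    (by simp [isAntichain_insert])
    fun x hx hxL => hcover x hx (head_le_of_isChain_rootStep hL hhead hxL)

theorem sum_fiveRoots_le_one_of_head (hL : L.IsChain RootStep)
    (hhead : L.head? = some (2, 3)) : (L.map (multiExponent fiveRoots)).sum ≤ 1 := by
  have hcover : ∀ x ∈ fiveRoots, (2, 3) ≤ x → ∃ A ∈
      ({{(2, 5), (3, 3)}} : Finset (Finset (ℕ × ℕ))), x ∈ A := by
    decide
  exact sum_map_multiExponent_le_card (sortedLT_of_isChain_rootStep hL)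
    (by simp [isAntichain_insert])
    fun x hx hxL => hcover x hx (head_le_of_isChain_rootStep hL hhead hxL)

theorem multiExponent_fiveRoots_mem_SD : multiExponent fiveRoots ∈ SD 4 3 2 := by
  refine ⟨fun β hβ => ?_, ?_, ?_⟩
  · have hsupp : ∀ β ∈ fiveRoots, inR 4 3 β := by simp [fiveRoots, inR]
    exact if_neg (mt (hsupp β) hβ)
  · rintro L ⟨-, hL, -, ⟨-, hlast⟩ | ⟨hhead, -⟩⟩
    · exact sum_fiveRoots_le_two_of_getLast hL hlast
    · exact sum_fiveRoots_le_two_of_head hL hhead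
  · rintro L₁ L₂ ⟨-, -, -, -, -, hL₁, hL₂, -, -, -, hhead₂, -, -, -⟩
    calc ((L₁ ++ L₂).map (multiExponent fiveRoots)).sum
        = (L₁.map (multiExponent fiveRoots)).sum + (L₂.map (multiExponent fiveRoots)).sum := by
          rw [List.map_append, List.sum_append]
      _ ≤ 3 + 1 :=
          add_le_add (sum_fiveRoots_le_three hL₁) (sum_fiveRoots_le_one_of_head hL₂ hhead₂)
      _ = 2 * cB 4 3 := rfl

end Membership

section NonMembership

variable {s : ℕ × ℕ → ℕ} {n i m : ℕ}

theorem sum_le_of_isType1 (hs : s ∈ SD n i m) {L : List (ℕ × ℕ)}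
    (hchain : L.IsChain RootStep) (hR : ∀ x ∈ L, inR n i x)
    (hends : (L.head? = some (1, i) ∧ L.getLast? = some (i, 2 * n - i - 1)) ∨
      (L.head? = some (1, i + 1) ∧ L.getLast? = some (i, 2 * n - i))) :
    (L.map s).sum ≤ m := by
  have hne : L ≠ [] := by
    rintro rfl
    simp at hends
  exact hs.2.1 L ⟨hne, hchain, hR, hends⟩

theorem sum_le_of_isType2 (hs : s ∈ SD n i m) {L₁ L₂ : List (ℕ × ℕ)} {j : ℕ}
    (hj : 1 ≤ j ∧ j < i) (hchain₁ : L₁.IsChain RootStep) (hchain₂ : L₂.IsChain RootStep)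
    (hR₁ : ∀ x ∈ L₁, inR n i x) (hR₂ : ∀ x ∈ L₂, inR n i x)
    (hends₁ : L₁.head? = some (1, i) ∧ L₁.getLast? = some (j, 2 * n - j))
    (hends₂ : L₂.head? = some (2, i) ∧ L₂.getLast? = some (j + 1, 2 * n - j - 1))
    (hdisj : L₁.Disjoint L₂) : ((L₁ ++ L₂).map s).sum ≤ m * cB n i := by
  have hne₁ : L₁ ≠ [] := by
    rintro rfl
    simp at hends₁
  have hne₂ : L₂ ≠ [] := by
    rintro rfl
    simp at hends₂
  exact hs.2.2 L₁ L₂ ⟨j, hj.1, hj.2, hne₁, hne₂, hchain₁, hchain₂, hR₁, hR₂,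
    hends₁.1, hends₂.1, hends₁.2, hends₂.2, fun _ hx => hdisj hx.1 hx.2⟩

theorem type1_inequalities_of_mem_SD (hs : s ∈ SD 4 3 m) :
    s (1, 3) + s (1, 4) ≤ m ∧ s (1, 3) + s (3, 3) ≤ m ∧ s (1, 4) + s (2, 5) ≤ m := by
  have h₁ := sum_le_of_isType1 hs (L := [(1, 3), (1, 4), (2, 4), (3, 4)])
    (by simp [RootStep]) (by simp [inR]) (by simp)
  have h₂ := sum_le_of_isType1 hs (L := [(1, 3), (2, 3), (3, 3), (3, 4)])
    (by simp [RootStep]) (by simp [inR]) (by simp)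
  have h₃ := sum_le_of_isType1 hs (L := [(1, 4), (1, 5), (2, 5), (3, 5)])
    (by simp [RootStep]) (by simp [inR]) (by simp)
  simp only [List.map_cons, List.map_nil, List.sum_cons, List.sum_nil] at h₁ h₂ h₃
  omega

theorem type2_inequalities_of_mem_SD (hs : s ∈ SD 4 3 m) :
    s (1, 3) + s (1, 6) + s (2, 5) ≤ 2 * m ∧ s (1, 4) + s (1, 6) + s (3, 3) ≤ 2 * m := by
  have h₁ := sum_le_of_isType2 hs (j := 1) (L₁ := [(1, 3), (1, 4), (1, 5), (1, 6), (1, 7)])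
    (L₂ := [(2, 3), (2, 4), (2, 5), (2, 6)]) (by simp) (by simp [RootStep]) (by simp [RootStep])
    (by simp [inR]) (by simp [inR]) (by simp) (by simp) (by simp)
  have h₂ := sum_le_of_isType2 hs (j := 2) (L₁ := [(1, 3), (1, 4), (1, 5), (1, 6), (2, 6)])
    (L₂ := [(2, 3), (3, 3), (3, 4), (3, 5)]) (by simp) (by simp [RootStep]) (by simp [RootStep])
    (by simp [inR]) (by simp [inR]) (by simp) (by simp) (by simp)
  have hc : cB 4 3 = 2 := rfl
  simp only [List.cons_append, List.nil_append, List.map_cons, List.map_nil, List.sum_cons,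
    List.sum_nil, hc] at h₁ h₂
  omega

theorem apply_one_six_eq_zero_of_add_eq_one {a b : ℕ × ℕ → ℕ} (ha : a ∈ SD 4 3 1)
    (hb : b ∈ SD 4 3 1) (hab : ∀ β ∈ fiveRoots, a β + b β = 1) : a (1, 6) = 0 := by
  simp only [fiveRoots, Finset.forall_mem_insert, Finset.mem_singleton, forall_eq] at hab
  obtain ⟨h13, h14, -, h25, h33⟩ := hab
  obtain ⟨ha₁, ha₂, ha₃⟩ := type1_inequalities_of_mem_SD ha
  obtain ⟨hb₁, hb₂, hb₃⟩ := type1_inequalities_of_mem_SD hb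
  have a25_eq : a (2, 5) = a (1, 3) := by omega
  have a14_eq : a (1, 4) = b (1, 3) := by omega
  have a33_eq : a (3, 3) = b (1, 3) := by omega
  obtain ⟨hdouble₁, hdouble₂⟩ := type2_inequalities_of_mem_SD ha
  rw [a25_eq] at hdouble₁
  rw [a14_eq, a33_eq] at hdouble₂
  omega

theorem multiExponent_fiveRoots_notMem_add :
    multiExponent fiveRoots ∉ SD 4 3 1 + SD 4 3 1 := by
  rintro ⟨a, ha, b, hb, hab⟩
  have hsum : ∀ β ∈ fiveRoots, a β + b β = 1 := fun β hβ => (congrFun hab β).trans (if_pos hβ)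
  have ha16 : a (1, 6) = 0 := apply_one_six_eq_zero_of_add_eq_one ha hb hsum
  have hb16 : b (1, 6) = 0 := apply_one_six_eq_zero_of_add_eq_one hb ha fun β hβ =>
    (add_comm _ _).trans (hsum β hβ)
  have h16 : a (1, 6) + b (1, 6) = 1 := hsum (1, 6) (by decide)
  simp [ha16, hb16] at h16

end NonMembership

/-- for `n = 4`, `i = 3`, the multi-exponent with value `1` exactly at
`α_{1,3}, α_{1,4}, α_{1,6}, α_{2,5}, α_{3,3}` lies in `S(D, 2·ω₃)` but not in
`S(D, ω₃) + S(D, ω₃)`. -/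
theorem SD_counterexample_i3 :
    (fun β => if β = (1, 3) ∨ β = (1, 4) ∨ β = (1, 6) ∨ β = (2, 5) ∨ β = (3, 3)
      then 1 else 0) ∈ SD 4 3 2 ∧
    (fun β => if β = (1, 3) ∨ β = (1, 4) ∨ β = (1, 6) ∨ β = (2, 5) ∨ β = (3, 3)
      then 1 else 0) ∉ SD 4 3 1 + SD 4 3 1 := by
  have hs : (fun β : ℕ × ℕ => if β = (1, 3) ∨ β = (1, 4) ∨ β = (1, 6) ∨ β = (2, 5) ∨ β = (3, 3)
      then 1 else 0) = multiExponent fiveRoots := by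
    funext β
    simp only [multiExponent, fiveRoots, Finset.mem_insert, Finset.mem_singleton]
  rw [hs]
  exact ⟨multiExponent_fiveRoots_mem_SD, multiExponent_fiveRoots_notMem_add⟩
end

section
/- Let n >= 2 and m >= 0 be integers. The number of vectors s = (s_1, ..., s_{2n-1}) in Z_{>=0}^{2n-1} with s_1 + ... + s_{2n-2} <= m and s_2 + ... + s_{2n-1} <= m equals choose(2n+m, m) - choose(2n+m-2, m-2), where choose(a,b) := 0 when b < 0. (Equivalently, |S(D, m*omega_1)| for type B_n equals the dimension of the irreducible so_{2n+1}-module with highest weight m*omega_1.) -/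
open scoped Pointwise

/-!
For two distinct indices `a` and `b`, compare `s a` with `s b`. If `s b ≤ s a`, the sum omitting `a`
is at most the sum omitting `b`, and subtracting `s b` from `s a` turns the latter into the total
of a new vector, which ranges over all vectors of total at most `m`. If `s a < s b`, subtracting
`s a + 1` from `s b` gives in the same way all vectors of total less than `m`. Stars and bars counts
both families, and Pascal's rule adds the two counts.
-/

open Finset

section Simplex

variable {ι : Type*} [Fintype ι]

theorem encard_sum_eq (m : ℕ) :
    {s : ι → ℕ | ∑ j, s j = m}.encard = (Fintype.card ι + m - 1).choose m := by
  classical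
  calc {s : ι → ℕ | ∑ j, s j = m}.encard
      = ENat.card (Sym ι m) := ENat.card_congr (Sym.equivNatSumOfFintype ι m).symm
    _ = (Fintype.card ι + m - 1).choose m := by
      rw [ENat.card_eq_coe_fintype_card, Sym.card_sym_eq_choose]

theorem encard_sum_le (m : ℕ) :
    {s : ι → ℕ | ∑ j, s j ≤ m}.encard = (Fintype.card ι + m).choose (Fintype.card ι) := by
  rw [Nat.choose_symm_add]
  induction m with
  | zero => simpa using encard_sum_eq (ι := ι) 0
  | succ m ih =>
    have hsplit : {s : ι → ℕ | ∑ j, s j ≤ m + 1} =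
        {s | ∑ j, s j ≤ m} ∪ {s | ∑ j, s j = m + 1} := by
      ext s
      exact Nat.le_succ_iff
    have hdisj : Disjoint {s : ι → ℕ | ∑ j, s j ≤ m} {s | ∑ j, s j = m + 1} :=
      Set.disjoint_left.mpr fun _ hle heq => (Nat.lt_succ_of_le hle).ne heq
    rw [hsplit, Set.encard_union_eq hdisj, ih, encard_sum_eq, ← add_assoc, Nat.add_sub_cancel,
      Nat.choose_succ_succ, Nat.cast_add]

theorem encard_sum_lt [Nonempty ι] (m : ℕ) :
    {s : ι → ℕ | ∑ j, s j < m}.encard = (Fintype.card ι + m - 1).choose (Fintype.card ι) := by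
  cases m with
  | zero => simp [Nat.choose_eq_zero_of_lt (Nat.sub_lt (Fintype.card_pos (α := ι)) one_pos)]
  | succ m => simpa only [Nat.lt_succ_iff] using! encard_sum_le (ι := ι) m

end Simplex

section Shear

variable {ι : Type*} [DecidableEq ι] {a b : ι}

/-- The affine shear of `ℕ^ι` adding `u b + c` to the coordinate `a` of `u`. Its inverse serves to
replace the bound on a sum omitting `b` by a bound on the total. -/
def shear (a b : ι) (c : ℕ) (u : ι → ℕ) : ι → ℕ :=
  u + Pi.single a (u b + c)

theorem shear_injective (hab : a ≠ b) (c : ℕ) : Function.Injective (shear a b c) := by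
  intro u v huv
  have hb : u b = v b := by simpa [shear, hab.symm] using congrFun huv b
  simpa only [shear, hb, add_left_inj] using huv

variable [Fintype ι]

theorem sum_erase_shear (hab : a ≠ b) (c : ℕ) (u : ι → ℕ) :
    ∑ j ∈ univ.erase b, shear a b c u j = ∑ j, u j + c := by
  have ha : a ∈ univ.erase b := mem_erase.mpr ⟨hab, mem_univ a⟩
  calc ∑ j ∈ univ.erase b, shear a b c u j
      = ∑ j ∈ univ.erase b, u j + (u b + c) := by
        simp only [shear, Pi.add_apply, sum_add_distrib, sum_pi_single', if_pos ha]
    _ = ∑ j, u j + c := by rw [← add_assoc, sum_erase_add univ u (mem_univ b)]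

theorem image_shear (hab : a ≠ b) (c m : ℕ) :
    shear a b c '' {u | ∑ j, u j + c ≤ m} =
      {s | s b + c ≤ s a ∧ ∑ j ∈ univ.erase b, s j ≤ m} := by
  ext s
  constructor
  · rintro ⟨u, hu, rfl⟩
    exact ⟨by simp [shear, hab.symm], (sum_erase_shear hab c u).trans_le hu⟩
  · rintro ⟨hle, hsum⟩
    have hshear : shear a b c (s - Pi.single a (s b + c)) = s := by
      funext j
      rcases eq_or_ne j a with rfl | hj
      · simp [shear, hab.symm, Nat.sub_add_cancel hle]
      · simp [shear, hj]
    refine ⟨_, ?_, hshear⟩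
    rwa [Set.mem_ofPred_eq, ← sum_erase_shear hab, hshear]

theorem encard_add_le_and_sum_erase_le (hab : a ≠ b) (c m : ℕ) :
    {s : ι → ℕ | s b + c ≤ s a ∧ ∑ j ∈ univ.erase b, s j ≤ m}.encard =
      {s : ι → ℕ | ∑ j, s j + c ≤ m}.encard := by
  rw [← image_shear hab, (shear_injective hab c).encard_image]

theorem setOf_sum_erase_le_eq_union (a b : ι) (m : ℕ) :
    {s : ι → ℕ | ∑ j ∈ univ.erase b, s j ≤ m ∧ ∑ j ∈ univ.erase a, s j ≤ m} =
      {s | s b ≤ s a ∧ ∑ j ∈ univ.erase b, s j ≤ m} ∪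
        {s | s a < s b ∧ ∑ j ∈ univ.erase a, s j ≤ m} := by
  ext s
  have ha := add_sum_erase univ s (mem_univ a)
  have hb := add_sum_erase univ s (mem_univ b)
  simp only [Set.mem_ofPred_eq, Set.mem_union]
  omega

theorem encard_sum_erase_le (hab : a ≠ b) (m : ℕ) :
    {s : ι → ℕ | ∑ j ∈ univ.erase b, s j ≤ m ∧ ∑ j ∈ univ.erase a, s j ≤ m}.encard =
      {s : ι → ℕ | ∑ j, s j ≤ m}.encard + {s : ι → ℕ | ∑ j, s j < m}.encard := by
  have hle : {s : ι → ℕ | s b ≤ s a ∧ ∑ j ∈ univ.erase b, s j ≤ m}.encard =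
      {s : ι → ℕ | ∑ j, s j ≤ m}.encard := encard_add_le_and_sum_erase_le hab 0 m
  have hlt : {s : ι → ℕ | s a < s b ∧ ∑ j ∈ univ.erase a, s j ≤ m}.encard =
      {s : ι → ℕ | ∑ j, s j < m}.encard := encard_add_le_and_sum_erase_le hab.symm 1 m
  have hdisj : Disjoint {s : ι → ℕ | s b ≤ s a ∧ ∑ j ∈ univ.erase b, s j ≤ m}
      {s | s a < s b ∧ ∑ j ∈ univ.erase a, s j ≤ m} :=
    Set.disjoint_left.mpr fun _ hba hgt => hgt.1.not_ge hba.1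
  rw [setOf_sum_erase_le_eq_union, Set.encard_union_eq hdisj, hle, hlt]

end Shear

theorem ite_choose_sub_two {k : ℕ} (hk : 0 < k) (m : ℕ) :
    (if 2 ≤ m then (k + m - 2).choose (m - 2) else 0) = (k + m - 2).choose k := by
  split_ifs with hm
  · obtain ⟨l, rfl⟩ := Nat.exists_eq_add_of_le' hm
    exact (Nat.choose_symm_add (a := k) (b := l)).symm
  · exact (Nat.choose_eq_zero_of_lt (by omega)).symm

theorem choose_add_choose_pred_eq_sub {d : ℕ} (hd : 0 < d) (m : ℕ) :
    (d + m).choose d + (d + m - 1).choose d =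
      (d + 1 + m).choose (d + 1) - (d + 1 + m - 2).choose (d + 1) := by
  obtain ⟨e, rfl⟩ := Nat.exists_eq_add_of_le' hd
  have hpascal : (e + m + 2).choose (e + 2) =
      (e + m + 1).choose (e + 1) + ((e + m).choose (e + 1) + (e + m).choose (e + 2)) := by
    rw [Nat.choose_succ_succ' (e + m + 1) (e + 1), Nat.choose_succ_succ' (e + m) (e + 1)]
  rw [show e + 1 + m - 1 = e + m by omega, show e + 1 + m = e + m + 1 by omega,
    show e + 1 + 1 + m - 2 = e + m by omega, show e + 1 + 1 + m = e + m + 2 by omega, hpascal,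
    ← add_assoc, Nat.add_sub_cancel]

theorem filter_val_lt_eq_erase {d : ℕ} {b : Fin d} (hb : (b : ℕ) + 1 = d) :
    univ.filter (fun j : Fin d => (j : ℕ) < b) = univ.erase b := by
  grind

theorem filter_one_le_val_eq_erase {d : ℕ} (hd : 0 < d) :
    univ.filter (fun j : Fin d => 1 ≤ (j : ℕ)) = univ.erase ⟨0, hd⟩ := by
  grind

theorem SD_omega1_card_general {ι : Type*} [Fintype ι] [DecidableEq ι] {a b : ι} (hab : a ≠ b)
    (m : ℕ) :
    {s : ι → ℕ | ∑ j ∈ univ.erase b, s j ≤ m ∧ ∑ j ∈ univ.erase a, s j ≤ m}.ncard =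
      (Fintype.card ι + 1 + m).choose m -
        (if 2 ≤ m then (Fintype.card ι + 1 + m - 2).choose (m - 2) else 0) := by
  have : Nonempty ι := ⟨a⟩
  rw [Set.ncard, encard_sum_erase_le hab, encard_sum_le, encard_sum_lt, ← Nat.cast_add,
    ENat.toNat_natCast, choose_add_choose_pred_eq_sub Fintype.card_pos,
    ite_choose_sub_two (Nat.succ_pos _), Nat.choose_symm_add]

/-- the number of `s ∈ ℤ_{≥0}^{2n-1}` with `s₁+⋯+s_{2n-2} ≤ m` and
`s₂+⋯+s_{2n-1} ≤ m` (i.e. `|S(D, m·ω₁)|` for `B_n`) equals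
`C(2n+m, m) - C(2n+m-2, m-2)` (the second term being `0` when `m < 2`), which is the
dimension of the irreducible `so_{2n+1}`-module of highest weight `m·ω₁`. -/
theorem SD_omega1_card (n : ℕ) (hn : 2 ≤ n) (m : ℕ) :
    {s : Fin (2 * n - 1) → ℕ |
        (∑ j ∈ Finset.univ.filter (fun j : Fin (2 * n - 1) => (j : ℕ) < 2 * n - 2), s j) ≤ m ∧
        (∑ j ∈ Finset.univ.filter (fun j : Fin (2 * n - 1) => 1 ≤ (j : ℕ)), s j) ≤ m}.ncard =
      Nat.choose (2 * n + m) m -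
        (if 2 ≤ m then Nat.choose (2 * n + m - 2) (m - 2) else 0) := by
  have hne : (⟨0, by omega⟩ : Fin (2 * n - 1)) ≠ ⟨2 * n - 2, by omega⟩ := by grind
  rw [filter_val_lt_eq_erase (b := ⟨2 * n - 2, by omega⟩) (by grind),
    filter_one_le_val_eq_erase (by omega), SD_omega1_card_general hne, Fintype.card_fin,
    Nat.sub_add_cancel (by omega)]
end
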